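/- There exists a constant c > 0 such that for every integer n ≥ 2, every set S of n points in the plane in general position, and any two trees T, T' ∈ 𝒯(S), the tree T can be transformed into T' by a sequence of at most c·n·log n empty-triangle rotations. -/

import Mathlib

open scoped Classical

noncomputable section

/-- Points in the plane. -/
abbrev Pt : Type := ℝ × ℝ

/-- The closed straight-line segment spanned by an (unordered) edge. -/
def segOf (e : Sym2 Pt) : Set Pt :=
  Sym2.lift ⟨fun p q => segment ℝ p q, fun p q => segment_symm ℝ p q⟩ e

/-- The set of endpoints of an edge. -/
def epts (e : Sym2 Pt) : Set Pt := {p | p ∈ e}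

/-- Two edges intersect in at most common endpoints (they do not cross). -/
def NoCrossPair (e f : Sym2 Pt) : Prop := segOf e ∩ segOf f ⊆ epts e ∩ epts f

/-- A set of edges is noncrossing: any two distinct edges meet in at most a common endpoint. -/
def NoCross (E : Finset (Sym2 Pt)) : Prop := ∀ e ∈ E, ∀ f ∈ E, e ≠ f → NoCrossPair e f

/-- `E` is the edge set of a noncrossing straight-line spanning tree on the point set `S`:
all edges are nondegenerate with endpoints in `S`, pairwise noncrossing, there are
`|S| - 1` of them, and they connect all of `S`. -/
def IsPST (S : Finset Pt) (E : Finset (Sym2 Pt)) : Prop :=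
  (∀ e ∈ E, ¬ e.IsDiag ∧ ∀ p ∈ e, p ∈ S) ∧
  NoCross E ∧ E.card + 1 = S.card ∧
  ∀ p ∈ S, ∀ q ∈ S, Relation.ReflTransGen (fun a b => s(a, b) ∈ E) p q

/-- `S` is in general position: no three of its points are collinear. -/
def GenPos (S : Finset Pt) : Prop :=
  ∀ p ∈ S, ∀ q ∈ S, ∀ r ∈ S, p ≠ q → p ≠ r → q ≠ r → ¬ Collinear ℝ ({p, q, r} : Set Pt)

/-- `S` is in convex position: every point of `S` is a vertex of the convex hull of `S`. -/
def ConvexPos (S : Finset Pt) : Prop :=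
  ∀ p ∈ S, p ∉ convexHull ℝ ((S : Set Pt) \ {p})

/-- The open interior of the triangle with vertices `p`, `q`, `r`. -/
def triInt (p q r : Pt) : Set Pt := interior (convexHull ℝ ({p, q, r} : Set Pt))

/-- `y` can be reached from `x` by a sequence of at most `m` `step`-operations. -/
def ReachesIn {α : Type*} (step : α → α → Prop) (m : ℕ) (x y : α) : Prop :=
  ∃ k ≤ m, ∃ f : ℕ → α, f 0 = x ∧ f k = y ∧ ∀ i < k, step (f i) (f (i + 1))

/-- A simultaneous rotation from `E₁` to `E₂`: a bijection `π` between the removed and the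
inserted edges such that each `e` shares an endpoint with `π e` and `π e` crosses no edge
of `E₁`. -/
def SimRotation (S : Finset Pt) (E₁ E₂ : Finset (Sym2 Pt)) : Prop :=
  IsPST S E₁ ∧ IsPST S E₂ ∧ ∃ π : Sym2 Pt → Sym2 Pt,
    Set.BijOn π ↑(E₁ \ E₂) ↑(E₂ \ E₁) ∧
    ∀ e ∈ E₁ \ E₂, (∃ p, p ∈ e ∧ p ∈ π e) ∧ ∀ f ∈ E₁, NoCrossPair (π e) f

/-- An empty-triangle rotation replaces an edge `pq` by an adjacent edge `pr` such that
no edge of either tree meets the interior of the triangle `pqr`. -/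
def EmptyTriRot (S : Finset Pt) (E₁ E₂ : Finset (Sym2 Pt)) : Prop :=
  IsPST S E₁ ∧ IsPST S E₂ ∧ ∃ p q r : Pt,
    E₁ \ E₂ = {s(p, q)} ∧ E₂ \ E₁ = {s(p, r)} ∧
    ∀ g ∈ E₁ ∪ E₂, Disjoint (segOf g) (triInt p q r)

/-- A simultaneous empty-triangle rotation. -/
def SimEmptyTriRot (S : Finset Pt) (E₁ E₂ : Finset (Sym2 Pt)) : Prop :=
  IsPST S E₁ ∧ IsPST S E₂ ∧ ∃ π : Sym2 Pt → Sym2 Pt,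
    Set.BijOn π ↑(E₁ \ E₂) ↑(E₂ \ E₁) ∧
    ∀ e ∈ E₁ \ E₂, ∃ p q r : Pt, e = s(p, q) ∧ π e = s(p, r) ∧
      ∀ g ∈ E₁ ∪ E₂, Disjoint (segOf g) (triInt p q r)

/-- An edge slide replaces `pq` by `pr`, where `qr` is an edge of both trees and no edge of
either tree meets the interior of the triangle `pqr`. -/
def EdgeSlide (S : Finset Pt) (E₁ E₂ : Finset (Sym2 Pt)) : Prop :=
  IsPST S E₁ ∧ IsPST S E₂ ∧ ∃ p q r : Pt,
    E₁ \ E₂ = {s(p, q)} ∧ E₂ \ E₁ = {s(p, r)} ∧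
    s(q, r) ∈ E₁ ∧ s(q, r) ∈ E₂ ∧
    ∀ g ∈ E₁ ∪ E₂, Disjoint (segOf g) (triInt p q r)

/-- A simultaneous edge slide. -/
def SimEdgeSlide (S : Finset Pt) (E₁ E₂ : Finset (Sym2 Pt)) : Prop :=
  IsPST S E₁ ∧ IsPST S E₂ ∧ ∃ π : Sym2 Pt → Sym2 Pt,
    Set.BijOn π ↑(E₁ \ E₂) ↑(E₂ \ E₁) ∧
    ∀ e ∈ E₁ \ E₂, ∃ p q r : Pt, e = s(p, q) ∧ π e = s(p, r) ∧
      s(q, r) ∈ E₁ ∧ s(q, r) ∈ E₂ ∧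
      ∀ g ∈ E₁ ∪ E₂, Disjoint (segOf g) (triInt p q r)

/-- `e` is an edge of the convex hull of `S`: it joins two distinct points of `S` and its
segment lies on the boundary of the convex hull of `S`. -/
def IsHullEdge (S : Finset Pt) (e : Sym2 Pt) : Prop :=
  ∃ u v : Pt, e = s(u, v) ∧ u ∈ S ∧ v ∈ S ∧ u ≠ v ∧
    segment ℝ u v ⊆ frontier (convexHull ℝ (S : Set Pt))

/-- The spanning star centered at `v`. -/
def starAt (S : Finset Pt) (v : Pt) : Finset (Sym2 Pt) := (S.erase v).image (fun w => s(v, w))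

/-- An edge-labeled tree: an edge set together with a labeling function. -/
abbrev LTree := Finset (Sym2 Pt) × (Sym2 Pt → ℕ)

/-- `T` is an edge-labeled noncrossing straight-line spanning tree on `S`: its edge set is in
`𝒯(S)` and its labeling is a bijection from the edges onto `{1, …, |S| - 1}`
(normalized to `0` on non-edges). -/
def IsLabeledPST (S : Finset Pt) (T : LTree) : Prop :=
  IsPST S T.1 ∧ Set.BijOn T.2 ↑T.1 (Set.Icc 1 (S.card - 1)) ∧ ∀ e, e ∉ T.1 → T.2 e = 0

/-- A simultaneous exchange on edge-labeled trees: an arbitrary bijection between removed and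
inserted edges transferring labels, all common edges keeping their labels. -/
def LabSimExchange (S : Finset Pt) (T₁ T₂ : LTree) : Prop :=
  IsLabeledPST S T₁ ∧ IsLabeledPST S T₂ ∧ ∃ π : Sym2 Pt → Sym2 Pt,
    Set.BijOn π ↑(T₁.1 \ T₂.1) ↑(T₂.1 \ T₁.1) ∧
    (∀ e ∈ T₁.1 \ T₂.1, T₂.2 (π e) = T₁.2 e) ∧
    ∀ e ∈ T₁.1 ∩ T₂.1, T₂.2 e = T₁.2 e

/-- A rotation on edge-labeled trees: the removed and inserted edges share an endpoint and do
not cross, the label of the removed edge is transferred, and all other labels are kept. -/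
def LabRotation (S : Finset Pt) (T₁ T₂ : LTree) : Prop :=
  IsLabeledPST S T₁ ∧ IsLabeledPST S T₂ ∧ ∃ e₁ e₂ : Sym2 Pt,
    T₁.1 \ T₂.1 = {e₁} ∧ T₂.1 \ T₁.1 = {e₂} ∧
    (∃ p, p ∈ e₁ ∧ p ∈ e₂) ∧ NoCrossPair e₁ e₂ ∧
    T₂.2 e₂ = T₁.2 e₁ ∧ ∀ e ∈ T₁.1 ∩ T₂.1, T₂.2 e = T₁.2 e

/-- An edge slide on edge-labeled trees, transferring the label of the slid edge. -/
def LabEdgeSlide (S : Finset Pt) (T₁ T₂ : LTree) : Prop :=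
  IsLabeledPST S T₁ ∧ IsLabeledPST S T₂ ∧ ∃ p q r : Pt,
    T₁.1 \ T₂.1 = {s(p, q)} ∧ T₂.1 \ T₁.1 = {s(p, r)} ∧
    s(q, r) ∈ T₁.1 ∧ s(q, r) ∈ T₂.1 ∧
    (∀ g ∈ T₁.1 ∪ T₂.1, Disjoint (segOf g) (triInt p q r)) ∧
    T₂.2 (s(p, r)) = T₁.2 (s(p, q)) ∧ ∀ e ∈ T₁.1 ∩ T₂.1, T₂.2 e = T₁.2 e

/-! Orientation and basic planar geometry -/

def ori (a b c : Pt) : ℝ := (b.1 - a.1) * (c.2 - a.2) - (b.2 - a.2) * (c.1 - a.1)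

def lrp (a b : Pt) (θ : ℝ) : Pt := (a.1 + θ * (b.1 - a.1), a.2 + θ * (b.2 - a.2))

def cb (A B C : Pt) (α β γ : ℝ) : Pt :=
  (α * A.1 + β * B.1 + γ * C.1, α * A.2 + β * B.2 + γ * C.2)

lemma mem_seg {a b w : Pt} : w ∈ segment ℝ a b ↔ ∃ θ, 0 ≤ θ ∧ θ ≤ 1 ∧ w = lrp a b θ := by
  constructor
  · rintro ⟨x, y, hx, hy, hxy, rfl⟩
    refine ⟨y, hy, by linarith, ?_⟩
    have : x = 1 - y := by linarith
    subst this
    ext <;> simp [lrp] <;> ring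
  · rintro ⟨θ, h0, h1, rfl⟩
    refine ⟨1 - θ, θ, by linarith, h0, by ring, ?_⟩
    ext <;> simp [lrp] <;> ring

lemma ori_lrp (a b c d : Pt) (θ : ℝ) :
    ori a b (lrp c d θ) = (1 - θ) * ori a b c + θ * ori a b d := by
  simp only [ori, lrp]; ring

lemma ori_cb (a b A B C : Pt) (α β γ : ℝ) (h : α + β + γ = 1) :
    ori a b (cb A B C α β γ) = α * ori a b A + β * ori a b B + γ * ori a b C := by
  have : γ = 1 - α - β := by linarith
  subst this
  simp only [ori, cb]; ring

lemma ori_self_left (a b : Pt) : ori a b a = 0 := by simp only [ori]; ring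
lemma ori_self_right (a b : Pt) : ori a b b = 0 := by simp only [ori]; ring
lemma ori_same (a b : Pt) : ori a a b = 0 := by simp only [ori]; ring
lemma ori_rot (a b c : Pt) : ori b c a = ori a b c := by simp only [ori]; ring
lemma ori_swap (a b c : Pt) : ori b a c = - ori a b c := by simp only [ori]; ring

lemma cb_weights {A B C : Pt} (hD : ori A B C ≠ 0) (w : Pt) :
    w = cb A B C (ori B C w / ori A B C) (ori C A w / ori A B C) (ori A B w / ori A B C) := by
  ext
  · simp only [cb]; field_simp; simp only [ori]; ring
  · simp only [cb]; field_simp; simp only [ori]; ring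

lemma weights_sum (A B C : Pt) (w : Pt) :
    ori B C w + ori C A w + ori A B w = ori A B C := by
  simp only [ori]; ring

lemma lrp_mem {a b : Pt} {θ : ℝ} (h0 : 0 ≤ θ) (h1 : θ ≤ 1) : lrp a b θ ∈ segment ℝ a b :=
  mem_seg.2 ⟨θ, h0, h1, rfl⟩

lemma lrp_lp (a b : Pt) (s t u : ℝ) : lrp (lrp a b s) (lrp a b t) u = lrp a b (s + u * (t - s)) := by
  ext <;> simp only [lrp] <;> ring

lemma lrp_inj {a b : Pt} {s t : ℝ} (h : lrp a b s = lrp a b t) (hab : a ≠ b) : s = t := by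
  by_contra hst
  apply hab
  have h1 := congrArg Prod.fst h
  have h2 := congrArg Prod.snd h
  simp only [lrp] at h1 h2
  have e1 : (s - t) * (b.1 - a.1) = 0 := by linarith
  have e2 : (s - t) * (b.2 - a.2) = 0 := by linarith
  have hst' : s - t ≠ 0 := sub_ne_zero.2 hst
  have f1 := (mul_eq_zero.1 e1).resolve_left hst'
  have f2 := (mul_eq_zero.1 e2).resolve_left hst'
  ext <;> linarith

lemma lrp_zero (a b : Pt) : lrp a b 0 = a := by ext <;> simp [lrp]
lemma lrp_one (a b : Pt) : lrp a b 1 = b := by ext <;> simp [lrp]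
lemma lrp_symm (a b : Pt) (t : ℝ) : lrp a b t = lrp b a (1 - t) := by
  ext <;> simp only [lrp] <;> ring

/-- half chord lemma -/
lemma half_chord {A B C m s : Pt} {am bm gm as bs gs : ℝ}
    (hm : m = cb A B C am bm gm) (hs : s = cb A B C as bs gs)
    (sm : am + bm + gm = 1) (ss : as + bs + gs = 1)
    (ham : 0 < am) (hbm : 0 < bm) (hgm : 0 ≤ gm) (hgs : 0 < gs)
    (hn : ¬ (0 < as ∧ 0 < bs)) :
    ∃ t, 0 ≤ t ∧ t ≤ 1 ∧ ∃ θ, 0 ≤ θ ∧ θ < 1 ∧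
      (lrp m s t = lrp C A θ ∨ lrp m s t = lrp C B θ) := by
  have key : ∃ t, 0 < t ∧ t ≤ 1 ∧ 0 ≤ (1 - t) * am + t * as ∧ 0 ≤ (1 - t) * bm + t * bs ∧
      ((1 - t) * am + t * as = 0 ∨ (1 - t) * bm + t * bs = 0) := by
    have aux : ∀ x y x' y' : ℝ, 0 < x → 0 < y → x' ≤ 0 → x' * y ≤ y' * x → ∃ t, 0 < t ∧ t ≤ 1 ∧
        (1 - t) * x + t * x' = 0 ∧ 0 ≤ (1 - t) * y + t * y' := by
      intro x y x' y' hx hy hx' h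
      have hd : 0 < x - x' := by linarith
      refine ⟨x / (x - x'), by positivity, by rw [div_le_one hd]; linarith, ?_, ?_⟩
      · field_simp; ring
      · have : (1 - x / (x - x')) * y + x / (x - x') * y' = (y' * x - x' * y) / (x - x') := by
          field_simp; ring
        rw [this]; apply div_nonneg <;> linarith
    by_cases hc : as * bm ≤ bs * am
    · have ha : as ≤ 0 := by
        by_contra h
        push Not at h
        have : ¬ 0 < bs := fun h' => hn ⟨h, h'⟩
        have h3 : bs * am ≤ 0 := mul_nonpos_of_nonpos_of_nonneg (by linarith) ham.le
        have h4 : 0 < as * bm := mul_pos h hbm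
        linarith
      obtain ⟨t, h0, h1, h2, h3⟩ := aux am bm as bs ham hbm ha hc
      exact ⟨t, h0, h1, h2.ge, h3, Or.inl h2⟩
    · push Not at hc
      have hb : bs ≤ 0 := by
        by_contra h
        push Not at h
        have : ¬ 0 < as := fun h' => hn ⟨h', h⟩
        have h3 : as * bm ≤ 0 := mul_nonpos_of_nonpos_of_nonneg (by linarith) hbm.le
        have h4 : 0 < bs * am := mul_pos h ham
        linarith
      obtain ⟨t, h0, h1, h2, h3⟩ := aux bm am bs as hbm ham hb hc.le
      exact ⟨t, h0, h1, h3, h2.ge, Or.inr h2⟩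
  obtain ⟨t, h0, h1, ha, hb, hz⟩ := key
  have hg : 0 < (1 - t) * gm + t * gs := by
    have := mul_nonneg (sub_nonneg.2 h1) hgm
    have := mul_pos h0 hgs
    linarith
  have hsum : ((1 - t) * am + t * as) + ((1 - t) * bm + t * bs) + ((1 - t) * gm + t * gs) = 1 := by
    linear_combination (1 - t) * sm + t * ss
  have hw : lrp m s t = cb A B C ((1 - t) * am + t * as) ((1 - t) * bm + t * bs)
      ((1 - t) * gm + t * gs) := by
    rw [hm, hs]; ext <;> simp only [lrp, cb] <;> ring
  refine ⟨t, h0.le, h1, ?_⟩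
  generalize (1 - t) * am + t * as = a at *
  generalize (1 - t) * bm + t * bs = b at *
  generalize (1 - t) * gm + t * gs = g at *
  have hge : g = 1 - a - b := by linarith
  subst hge
  rcases hz with hz | hz
  · refine ⟨b, hb, by linarith, Or.inr ?_⟩
    rw [hw, hz]; ext <;> simp only [lrp, cb] <;> ring
  · refine ⟨a, ha, by linarith, Or.inl ?_⟩
    rw [hw, hz]; ext <;> simp only [lrp, cb] <;> ring

/-- Noncrossing edge sets on a point set in general position. -/
structure PM (S : Finset Pt) (M : Finset (Sym2 Pt)) : Prop where
  gen : ∀ a ∈ S, ∀ b ∈ S, ∀ c ∈ S, a ≠ b → a ≠ c → b ≠ c → ori a b c ≠ 0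
  ed : ∀ a b, s(a, b) ∈ M → a ∈ S ∧ b ∈ S ∧ a ≠ b
  nc : ∀ a b c d w, s(a, b) ∈ M → s(c, d) ∈ M → s(a, b) ≠ s(c, d) → w ∈ segment ℝ a b →
    w ∈ segment ℝ c d → (w = a ∨ w = b) ∧ (w = c ∨ w = d)

lemma PM.gen0 {S M} (h : PM S M) {a b c : Pt} (ha : a ∈ S) (hb : b ∈ S) (hc : c ∈ S)
    (hab : a ≠ b) (h0 : ori a b c = 0) : c = a ∨ c = b := by
  by_contra hn
  push Not at hn
  exact h.gen a ha b hb c hc hab (Ne.symm hn.1) (Ne.symm hn.2) h0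

lemma generic_x0 {S M} (h : PM S M) {p q : Pt} (hp : p ∈ S) (hq : q ∈ S) (hpq : p ≠ q) :
    ∃ l : ℝ, 0 < l ∧ l < 1 ∧ ∀ a ∈ S, ∀ b ∈ S, a ≠ b → s(a, b) ≠ s(p, q) →
      ori a b (lrp p q l) ≠ 0 := by
  have hfin : (⋃ a ∈ S, ⋃ b ∈ S,
      {l : ℝ | a ≠ b ∧ s(a, b) ≠ s(p, q) ∧ ori a b (lrp p q l) = 0}).Finite := by
    apply Set.Finite.biUnion S.finite_toSet
    intro a ha
    apply Set.Finite.biUnion S.finite_toSet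
    intro b hb
    apply Set.Subsingleton.finite
    rintro x ⟨hab, hne, hx⟩ y ⟨-, -, hy⟩
    by_contra hxy
    rw [ori_lrp] at hx hy
    have e1 : (x - y) * (ori a b q - ori a b p) = 0 := by linarith
    have e2 := (mul_eq_zero.1 e1).resolve_left (sub_ne_zero.2 hxy)
    have e3 : ori a b p = 0 := by
      have : ori a b q = ori a b p := by linarith
      rw [this] at hx; linarith
    have e4 : ori a b q = 0 := by linarith
    have f1 := h.gen0 ha hb hp hab e3
    have f2 := h.gen0 ha hb hq hab e4
    apply hne
    rcases f1 with rfl | rfl <;> rcases f2 with rfl | rfl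
    · exact absurd rfl hpq
    · rfl
    · exact Sym2.eq_swap
    · exact absurd rfl hpq
  obtain ⟨l, hl, hl'⟩ := (Set.Ioo_infinite (zero_lt_one (α := ℝ))).exists_notMem_finite hfin
  refine ⟨l, hl.1, hl.2, ?_⟩
  intro a ha b hb hab hne h0
  apply hl'
  simp only [Set.mem_iUnion]
  exact ⟨a, ha, b, hb, hab, hne, h0⟩

lemma wU_lin (q z : Pt) (D k : ℝ) (a b : Pt) (t : ℝ) :
    ori q z (lrp a b t) / D / k = (1 - t) * (ori q z a / D / k) + t * (ori q z b / D / k) := by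
  rw [ori_lrp]; ring

/-- the left half of the growing triangle contains no part of an edge -/
lemma left_clean {S M} (h : PM S M) {p q z : Pt} {l k : ℝ} (he : s(p, q) ∈ M)
    (hl0 : 0 < l) (hl1 : l < 1) (hk : 0 ≤ k) (hD : ori p q z ≠ 0)
    (hS : ∀ v ∈ S, ¬ (0 < ori p q v / ori p q z ∧
      k * (ori p q v / ori p q z) < ori q z v / ori p q z / (1 - l) ∧
      k * (ori p q v / ori p q z) < ori z p v / ori p q z / l))
    (hvis : ∀ c d θ, s(c, d) ∈ M → 0 < θ → θ < 1 → lrp (lrp p q l) z θ ∉ segment ℝ c d)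
    {c d m : Pt} (hf : s(c, d) ∈ M) (hm : m ∈ segment ℝ c d)
    (h1 : 0 < ori p q m / ori p q z)
    (h2 : k * (ori p q m / ori p q z) < ori z p m / ori p q z / l)
    (h3 : ori z p m / ori p q z / l < ori q z m / ori p q z / (1 - l)) : False := by
  obtain ⟨hp, hq, hpq⟩ := h.ed _ _ he
  obtain ⟨hc, hd, hcd⟩ := h.ed _ _ hf
  set D := ori p q z with hDdef
  -- linear functionals
  set U : Pt → ℝ := fun v => ori q z v / D / (1 - l) with hU
  set T : Pt → ℝ := fun v => ori z p v / D / l with hT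
  set G : Pt → ℝ := fun v => ori p q v / D with hG
  have l1 : (1 - l) ≠ 0 := by linarith
  have hsum : ∀ v, (1 - l) * U v + l * T v + G v = 1 := by
    intro v
    have := weights_sum p q z v
    simp only [hU, hT, hG]
    field_simp
    linarith
  have hrep : ∀ v, v = cb p (lrp (lrp p q l) z (1 / (1 + k))) (lrp p q l)
      ((1 - l) * (U v - T v)) (G v * (1 + k)) (T v - k * G v) := by
    intro v
    have hv := cb_weights hD v
    have a1 : ori q z v / D = (1 - l) * U v := by simp only [hU]; field_simp
    have a2 : ori z p v / D = l * T v := by simp only [hT]; field_simp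
    have a3 : ori p q v / D = G v := by simp only [hG]
    rw [← hDdef, a1, a2, a3] at hv
    have hs := hsum v
    have hk1 : (1 + k) ≠ 0 := by linarith
    have hs' : G v = 1 - ((1 - l) * U v + l * T v) := by linarith
    generalize U v = u at *
    generalize T v = t at *
    generalize G v = g at *
    subst hs'
    conv_lhs => rw [hv]
    ext
    · simp only [cb, lrp]; field_simp; ring
    · simp only [cb, lrp]; field_simp; ring
  have hrs : ∀ v, (1 - l) * (U v - T v) + G v * (1 + k) + (T v - k * G v) = 1 := by
    intro v; have := hsum v; linarith
  -- choose endpoint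
  obtain ⟨μ, hμ0, hμ1, hmμ⟩ := mem_seg.1 hm
  have hlin : T m - k * G m = (1 - μ) * (T c - k * G c) + μ * (T d - k * G d) := by
    have e1 : T m = (1 - μ) * T c + μ * T d := by simp only [hT, hmμ]; exact wU_lin _ _ _ _ _ _ _
    have e2 : G m = (1 - μ) * G c + μ * G d := by simp only [hG, hmμ, ori_lrp]; ring
    rw [e1, e2]; ring
  have hGm : 0 < G m := h1
  have hTm : k * G m < T m := h2
  have hUm : T m < U m := h3
  have hex : ∃ s, s ∈ S ∧ s ∈ segment ℝ c d ∧ 0 < T s - k * G s := by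
    by_contra hno
    push Not at hno
    have a := hno c hc (left_mem_segment _ _ _)
    have b := hno d hd (right_mem_segment _ _ _)
    have : T m - k * G m ≤ 0 := by
      rw [hlin]
      have := mul_nonneg (sub_nonneg.2 hμ1) (neg_nonneg.2 a)
      have := mul_nonneg hμ0 (neg_nonneg.2 b)
      linarith
    linarith
  obtain ⟨s, hsS, hsf, hsT⟩ := hex
  have hnf : ¬ (0 < (1 - l) * (U s - T s) ∧ 0 < G s * (1 + k)) := by
    rintro ⟨x, y⟩
    have x' : 0 < U s - T s := (pos_iff_pos_of_mul_pos x).1 (by linarith)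
    have y' : 0 < G s := (pos_iff_pos_of_mul_pos y).2 (by linarith)
    exact hS s hsS ⟨y', by show k * G s < U s; linarith, by show k * G s < T s; linarith⟩
  obtain ⟨t, ht0, ht1, θ, hθ0, hθ1, hcase⟩ := half_chord (hrep m) (hrep s) (hrs m) (hrs s)
    (mul_pos (by linarith) (by linarith)) (mul_pos hGm (by linarith)) (by linarith) hsT hnf
  have hwf : lrp m s t ∈ segment ℝ c d :=
    (convex_segment c d).segment_subset hm hsf (lrp_mem ht0 ht1)
  have hfe : s(p, q) ≠ s(c, d) := by
    intro hh
    have : ori p q m = 0 := by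
      rw [hmμ, ori_lrp]
      rcases Sym2.eq_iff.1 hh with ⟨rfl, rfl⟩ | ⟨rfl, rfl⟩ <;>
        simp [ori_self_left, ori_self_right]
    simp only [hG, this] at hGm
    simp at hGm
  have onE : ∀ x : ℝ, 0 < x → x < 1 → lrp p q x ∉ segment ℝ c d := by
    intro x hx0 hx1 hx
    rcases (h.nc p q c d _ he hf hfe (lrp_mem hx0.le hx1.le) hx).1 with e | e
    · have := lrp_inj (e.trans (lrp_zero p q).symm) hpq; linarith
    · have := lrp_inj (e.trans (lrp_one p q).symm) hpq; linarith
  rcases hcase with e | e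
  · have : lrp (lrp p q l) p θ = lrp p q (l * (1 - θ)) := by
      ext <;> simp only [lrp] <;> ring
    rw [e, this] at hwf
    have := mul_pos hl0 (sub_pos.2 hθ1)
    exact onE _ this (by nlinarith) hwf
  · rcases hθ0.eq_or_lt with h0 | h0
    · rw [e, ← h0, lrp_zero] at hwf
      exact onE _ hl0 hl1 hwf
    · have : lrp (lrp p q l) (lrp (lrp p q l) z (1 / (1 + k))) θ
          = lrp (lrp p q l) z (θ * (1 / (1 + k))) := by
        ext <;> simp only [lrp] <;> ring
      rw [e, this] at hwf
      have hk1 : 0 < 1 / (1 + k) := by positivity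
      have hk2 : 1 / (1 + k) ≤ 1 := by rw [div_le_one (by linarith)]; linarith
      exact hvis c d _ hf (mul_pos h0 hk1) (by nlinarith) hwf

lemma tri_of_vis {S M} (h : PM S M) {p q z : Pt} {l : ℝ} (he : s(p, q) ∈ M)
    (hl0 : 0 < l) (hl1 : l < 1) (hzS : z ∈ S) (hD : 0 < ori p q z)
    (hvis : ∀ c d θ, s(c, d) ∈ M → 0 < θ → θ < 1 → lrp (lrp p q l) z θ ∉ segment ℝ c d) :
    ∃ r ∈ S, 0 < ori p q r ∧ ∀ c d w, s(c, d) ∈ M → w ∈ segment ℝ c d →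
      ¬ (0 < ori p q w ∧ 0 < ori q r w ∧ 0 < ori r p w) := by
  set D := ori p q z with hDdef
  set U : Pt → ℝ := fun v => ori q z v / D / (1 - l) with hU
  set T : Pt → ℝ := fun v => ori z p v / D / l with hT
  set G : Pt → ℝ := fun v => ori p q v / D with hG
  have hl1' : 0 < 1 - l := by linarith
  obtain ⟨r, hr, hmax⟩ := Finset.exists_max_image (S.filter (fun v => 0 < ori p q v))
    (fun v => min (U v) (T v) / G v) ⟨z, by simp [hzS, ← hDdef, hD]⟩
  simp only [Finset.mem_filter] at hr hmax
  set k := min (U r) (T r) / G r with hkdef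
  have hGr : 0 < G r := div_pos hr.2 hD
  have hk : 0 ≤ k := by
    have := hmax z ⟨hzS, hD⟩
    have e1 : U z = 0 := by simp [hU, ori_self_right]
    have e2 : T z = 0 := by simp [hT, ori_self_left]
    simpa [e1, e2] using this
  have hkU : k * G r ≤ U r := by
    rw [hkdef, div_mul_cancel₀ _ hGr.ne']; exact min_le_left _ _
  have hkT : k * G r ≤ T r := by
    rw [hkdef, div_mul_cancel₀ _ hGr.ne']; exact min_le_right _ _
  have hS : ∀ v ∈ S, ¬ (0 < G v ∧ k * G v < U v ∧ k * G v < T v) := by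
    rintro v hv ⟨a, b, c⟩
    have hv0 : 0 < ori p q v := by
      have : G v * D = ori p q v := by simp only [hG]; field_simp
      rw [← this]; exact mul_pos a hD
    have := hmax v ⟨hv, hv0⟩
    have h2 : k < min (U v) (T v) / G v := by
      rw [lt_div_iff₀ a]; exact lt_min b c
    linarith
  refine ⟨r, hr.1, hr.2, ?_⟩
  rintro c d w hf hw ⟨w1, w2, w3⟩
  have hsum : ∀ v, (1 - l) * U v + l * T v + G v = 1 := by
    intro v
    have := weights_sum p q z v
    simp only [hU, hT, hG]
    field_simp
    linarith
  have hGw : 0 < G w := div_pos w1 hD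
  -- w as a combination of p, q, r
  have hrne : ori p q r ≠ 0 := hr.2.ne'
  have hwc := cb_weights hrne w
  set a := ori q r w / ori p q r
  set b := ori r p w / ori p q r
  set g := ori p q w / ori p q r
  have ha : 0 < a := div_pos w2 hr.2
  have hb : 0 < b := div_pos w3 hr.2
  have hg : 0 < g := div_pos w1 hr.2
  have habg : a + b + g = 1 := by
    have := weights_sum p q r w
    simp only [a, b, g]; field_simp; linarith
  have hUw : U w = a / (1 - l) + g * U r := by
    simp only [hU]; rw [hwc, ori_cb _ _ _ _ _ _ _ _ habg, ori_self_left, ori_rot p q z, ← hDdef]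
    field_simp; ring
  have hTw : T w = b / l + g * T r := by
    simp only [hT]; rw [hwc, ori_cb _ _ _ _ _ _ _ _ habg, ori_self_right]
    rw [show ori z p q = D by rw [hDdef]; simp only [ori]; ring]
    field_simp; ring
  have hGw' : G w = g * G r := by
    simp only [hG]; rw [hwc, ori_cb _ _ _ _ _ _ _ _ habg, ori_self_left, ori_self_right]
    field_simp; ring
  have hUk : k * G w < U w := by
    rw [hUw, hGw']
    have := div_pos ha hl1'
    have := mul_le_mul_of_nonneg_left hkU hg.le
    linarith
  have hTk : k * G w < T w := by
    rw [hTw, hGw']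
    have := div_pos hb hl0
    have := mul_le_mul_of_nonneg_left hkT hg.le
    linarith
  rcases lt_trichotomy (T w) (U w) with hlt | heq | hgt
  · exact left_clean h he hl0 hl1 hk hD.ne' (fun v hv => hS v hv) hvis hf hw hGw hTk hlt
  · have hs := hsum w
    rw [heq] at hs
    have hU1 : U w = 1 - G w := by linarith
    have hkG := mul_nonneg hk hGw.le
    have : w = lrp (lrp p q l) z (G w) := by
      have hv := cb_weights hD.ne' w
      have a1 : ori q z w / D = (1 - l) * U w := by simp only [hU]; field_simp
      have a2 : ori z p w / D = l * T w := by simp only [hT]; field_simp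
      have a3 : ori p q w / D = G w := by simp only [hG]
      rw [← hDdef, a1, a2, a3, heq, hU1] at hv
      conv_lhs => rw [hv]
      ext <;> simp only [cb, lrp] <;> ring
    exact hvis c d (G w) hf hGw (by linarith) (this ▸ hw)
  · have hD' : ori q p z = - D := by rw [ori_swap]
    have ex : lrp q p (1 - l) = lrp p q l := (lrp_symm p q l).symm
    have e1 : ∀ v, ori q p v / ori q p z = G v := by
      intro v; rw [hD', ori_swap]; simp only [hG]; rw [neg_div_neg_eq]
    have e2 : ∀ v, ori p z v / ori q p z / (1 - (1 - l)) = T v := by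
      intro v; rw [hD', ori_swap]; simp only [hT]; rw [neg_div_neg_eq]; simp
    have e3 : ∀ v, ori z q v / ori q p z / (1 - l) = U v := by
      intro v; rw [hD', ori_swap]; simp only [hU]; rw [neg_div_neg_eq]
    refine left_clean (p := q) (q := p) (z := z) (l := 1 - l) (k := k) h (Sym2.eq_swap ▸ he)
      (by linarith) (by linarith) hk ?_ ?_ ?_ hf hw ?_ ?_ ?_
    · rw [hD']; exact neg_ne_zero.2 hD.ne'
    · intro v hv; rw [e1, e2, e3]
      rintro ⟨x, y, z⟩; exact hS v hv ⟨x, z, y⟩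
    · rw [ex]; exact hvis
    · rw [e1]; exact hGw
    · rw [e1, e3]; exact hUk
    · rw [e2, e3]; exact hgt

lemma ori_seg_zero {a b w : Pt} (h : w ∈ segment ℝ a b) : ori a b w = 0 := by
  obtain ⟨θ, -, -, rfl⟩ := mem_seg.1 h
  rw [ori_lrp, ori_self_left, ori_self_right]; ring

lemma vis_exists {S M} (h : PM S M) {p q w : Pt} {l : ℝ} (he : s(p, q) ∈ M)
    (hwS : w ∈ S) (hw : 0 < ori p q w)
    (hgen : ∀ a ∈ S, ∀ b ∈ S, a ≠ b → s(a, b) ≠ s(p, q) → ori a b (lrp p q l) ≠ 0) :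
    ∃ z ∈ S, 0 < ori p q z ∧
      ∀ c d θ, s(c, d) ∈ M → 0 < θ → θ < 1 → lrp (lrp p q l) z θ ∉ segment ℝ c d := by
  obtain ⟨hp, hq, hpq⟩ := h.ed _ _ he
  set x0 := lrp p q l with hx0
  have hx00 : ori p q x0 = 0 := by rw [hx0, ori_lrp, ori_self_left, ori_self_right]; ring
  have above_ne : ∀ v u, 0 < ori p q v → s(v, u) ≠ s(p, q) := by
    intro v u hv hh
    rcases Sym2.eq_iff.1 hh with ⟨rfl, rfl⟩ | ⟨rfl, rfl⟩
    · rw [ori_self_left] at hv; exact lt_irrefl _ hv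
    · rw [ori_self_right] at hv; exact lt_irrefl _ hv
  set Θ : Set ℝ := {θ | 0 < θ ∧ θ < 1 ∧ ∃ c d, s(c, d) ∈ M ∧ lrp x0 w θ ∈ segment ℝ c d} with hΘ
  have hfin : Θ.Finite := by
    apply Set.Finite.subset ((S ×ˢ S).image (fun cd : Pt × Pt =>
      ori cd.1 cd.2 x0 / (ori cd.1 cd.2 x0 - ori cd.1 cd.2 w))).finite_toSet
    rintro θ ⟨h0, h1, c, d, hf, hm⟩
    obtain ⟨hc, hd, hcd⟩ := h.ed _ _ hf
    have hne : s(c, d) ≠ s(p, q) := by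
      intro hh
      have hm' : lrp x0 w θ ∈ segment ℝ p q := by
        rcases Sym2.eq_iff.1 hh with ⟨rfl, rfl⟩ | ⟨rfl, rfl⟩
        · exact hm
        · rw [segment_symm]; exact hm
      have := ori_seg_zero hm'
      rw [ori_lrp, hx00] at this
      have := mul_pos h0 hw
      linarith
    have hx := hgen c hc d hd hcd hne
    have hz := ori_seg_zero hm
    rw [ori_lrp] at hz
    simp only [Finset.coe_image, Set.mem_image]
    refine ⟨(c, d), by simp [hc, hd], ?_⟩
    have hden : ori c d x0 - ori c d w ≠ 0 := by
      intro hh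
      apply hx
      have : ori c d w = ori c d x0 := by linarith
      rw [this] at hz; linarith
    simp only
    rw [div_eq_iff hden]; linarith
  rcases Set.eq_empty_or_nonempty Θ with hE | hNE
  · refine ⟨w, hwS, hw, ?_⟩
    intro c d θ hf h0 h1 hm
    have : θ ∈ Θ := ⟨h0, h1, c, d, hf, hm⟩
    rw [hE] at this; exact this
  obtain ⟨θ1, hθ1, hmin⟩ := Set.exists_min_image Θ id hfin hNE
  simp only [id] at hmin
  obtain ⟨ht0, ht1, hcd'⟩ := hθ1
  set x1 := lrp x0 w θ1 with hx1
  have hx1pos : 0 < ori p q x1 := by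
    rw [hx1, ori_lrp, hx00]; have := mul_pos ht0 hw; linarith
  have hfirst : ∀ c d θ, s(c, d) ∈ M → 0 < θ → θ < 1 → lrp x0 x1 θ ∉ segment ℝ c d := by
    intro c d θ hf h0 h1 hm
    have e : lrp x0 x1 θ = lrp x0 w (θ * θ1) := by rw [hx1]; ext <;> simp only [lrp] <;> ring
    have hlt : θ * θ1 < θ1 := by nlinarith
    have : θ * θ1 ∈ Θ := ⟨mul_pos h0 ht0, by linarith, c, d, hf, e ▸ hm⟩
    have := hmin _ this
    linarith
  by_cases hx1S : x1 ∈ S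
  · exact ⟨x1, hx1S, hx1pos, hfirst⟩
  -- choose the endpoint above the line
  have hcd : ∃ c d, s(c, d) ∈ M ∧ x1 ∈ segment ℝ c d ∧ 0 < ori p q c := by
    obtain ⟨c, d, hf, hm⟩ := hcd'
    by_cases hc : 0 < ori p q c
    · exact ⟨c, d, hf, hm, hc⟩
    · refine ⟨d, c, Sym2.eq_swap ▸ hf, by rw [segment_symm]; exact hm, ?_⟩
      obtain ⟨μ, hμ0, hμ1, e⟩ := mem_seg.1 hm
      rw [e, ori_lrp] at hx1pos
      by_contra hd
      push Not at hc hd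
      have := mul_nonneg (sub_nonneg.2 hμ1) (neg_nonneg.2 hc)
      have := mul_nonneg hμ0 (neg_nonneg.2 hd)
      linarith
  obtain ⟨c, d, hg, hx1g, hcpos⟩ := hcd
  obtain ⟨hc, hd, hcdne⟩ := h.ed _ _ hg
  obtain ⟨μ, hμ0, hμ1, hμ⟩ := mem_seg.1 hx1g
  have hμ0' : 0 < μ := by
    rcases hμ0.eq_or_lt with e | e
    · rw [← e, lrp_zero] at hμ; exact absurd (hμ ▸ hc) hx1S
    · exact e
  have hμ1' : μ < 1 := by
    rcases hμ1.eq_or_lt with e | e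
    · rw [e, lrp_one] at hμ; exact absurd (hμ ▸ hd) hx1S
    · exact e
  have hD : ori x0 x1 c ≠ 0 := by
    have e : ori x0 x1 c = - (μ * ori c d x0) := by
      rw [hμ]; simp only [ori, lrp]; ring
    rw [e]
    exact neg_ne_zero.2 (mul_ne_zero hμ0'.ne' (hgen c hc d hd hcdne (above_ne c d hcpos)))
  set D := ori x0 x1 c with hDdef
  set A : Pt → ℝ := fun v => ori x1 c v / D with hA
  set B : Pt → ℝ := fun v => ori c x0 v / D with hB
  set G : Pt → ℝ := fun v => ori x0 x1 v / D with hG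
  have hsum : ∀ v, A v + B v + G v = 1 := by
    intro v
    have := weights_sum x0 x1 c v
    simp only [hA, hB, hG]; field_simp; linarith
  have hrep0 : ∀ v, v = cb x0 x1 c (A v) (B v) (G v) := fun v => cb_weights hD v
  have Alin : ∀ a b t, A (lrp a b t) = (1 - t) * A a + t * A b := by
    intro a b t; simp only [hA, ori_lrp]; ring
  have Blin : ∀ a b t, B (lrp a b t) = (1 - t) * B a + t * B b := by
    intro a b t; simp only [hB, ori_lrp]; ring
  have Glin : ∀ a b t, G (lrp a b t) = (1 - t) * G a + t * G b := by
    intro a b t; simp only [hG, ori_lrp]; ring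
  have hA0 : A x0 = 1 := by simp only [hA]; rw [ori_rot x0 x1 c, ← hDdef, div_self hD]
  have hB0 : B x0 = 0 := by simp [hB, ori_self_right]
  have hG0 : G x0 = 0 := by simp [hG, ori_self_left]
  have hAc : A c = 0 := by simp [hA, ori_self_right]
  have hBc : B c = 0 := by simp [hB, ori_self_left]
  have hGc : G c = 1 := by simp only [hG]; rw [← hDdef, div_self hD]
  have hAd : A d = 0 := by
    have : ori x1 c d = 0 := by rw [hμ]; simp only [ori, lrp]; ring
    simp [hA, this]
  obtain ⟨z, hz, hmax⟩ := Finset.exists_max_image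
    (S.filter (fun v => 0 < G v ∧ 0 ≤ A v ∧ 0 ≤ B v))
    (fun v => B v / G v) ⟨c, by simp [hc, hAc, hBc, hGc]⟩
  simp only [Finset.mem_filter] at hz hmax
  obtain ⟨hzS, hGz, hAz, hBz⟩ := hz
  set k := B z / G z with hkdef
  have hk : 0 ≤ k := div_nonneg hBz hGz.le
  have hkz : B z = k * G z := by rw [hkdef]; field_simp
  have hzpos : 0 < ori p q z := by
    rw [hrep0 z, ori_cb _ _ _ _ _ _ _ _ (hsum z), hx00]
    have := mul_pos hGz hcpos
    have := mul_nonneg hBz hx1pos.le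
    linarith
  refine ⟨z, hzS, hzpos, ?_⟩
  intro a b σ hf hσ0 hσ1 hwf
  obtain ⟨ha, hb, hab⟩ := h.ed _ _ hf
  set w' := lrp x0 z σ with hw'
  have hAw : 0 < A w' := by
    rw [hw', Alin, hA0]
    have := mul_nonneg hσ0.le hAz
    linarith
  have hGw : 0 < G w' := by
    rw [hw', Glin, hG0]; have := mul_pos hσ0 hGz; linarith
  have hZw : B w' - k * G w' = 0 := by
    rw [hw', Blin, Glin, hB0, hG0, hkz]; ring
  have hfg : s(a, b) ≠ s(c, d) := by
    intro hh
    have hm' : w' ∈ segment ℝ c d := by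
      rcases Sym2.eq_iff.1 hh with ⟨rfl, rfl⟩ | ⟨rfl, rfl⟩
      · exact hwf
      · rw [segment_symm]; exact hwf
    obtain ⟨ν, -, -, e⟩ := mem_seg.1 hm'
    rw [e, Alin, hAc, hAd] at hAw
    simp at hAw
  have honline : ∀ v ∈ S, B v - k * G v = 0 → v = z := by
    intro v hv h0
    by_contra hvz
    have hx := hgen z hzS v hv (Ne.symm hvz) (above_ne z v hzpos)
    apply hx
    have e1 : ori z v x0 = ori x0 z v := by rw [ori_rot x0 z v]
    rw [e1]
    have e2 : ori x0 z v = D * (B v * G z - B z * G v) * (-1) := by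
      have hv' := hrep0 v
      have hz' := hrep0 z
      have s1 := hsum v
      have s2 := hsum z
      generalize B v = bv at *
      generalize G v = gv at *
      generalize A v = av at *
      generalize B z = bz at *
      generalize G z = gz at *
      generalize A z = az at *
      have t1 : av = 1 - bv - gv := by linarith
      have t2 : az = 1 - bz - gz := by linarith
      rw [hv', hz', t1, t2, hDdef]
      simp only [ori, cb]; ring
    rw [e2, hkz]
    have : B v = k * G v := by linarith
    rw [this]; ring
  obtain ⟨ν, hν0, hν1, hν⟩ := mem_seg.1 hwf
  have hx0z : x0 ≠ z := by
    intro hh; rw [← hh, hx00] at hzpos; exact lt_irrefl _ hzpos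
  have hw'z : w' ≠ z := by
    intro hh
    have := lrp_inj (hh.trans (lrp_one x0 z).symm) hx0z
    linarith
  have hex : ∃ s, s ∈ S ∧ s ∈ segment ℝ a b ∧ 0 < B s - k * G s := by
    by_contra hno
    push Not at hno
    have na := hno a ha (left_mem_segment _ _ _)
    have nb := hno b hb (right_mem_segment _ _ _)
    have hlin : (1 - ν) * (B a - k * G a) + ν * (B b - k * G b) = 0 := by
      rw [hν, Blin, Glin] at hZw; linarith
    have q1 := mul_nonneg (sub_nonneg.2 hν1) (neg_nonneg.2 na)
    have q2 := mul_nonneg hν0 (neg_nonneg.2 nb)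
    have r1 : (1 - ν) * (B a - k * G a) = 0 := by linarith
    have r2 : ν * (B b - k * G b) = 0 := by linarith
    rcases mul_eq_zero.1 r1 with e | e
    · rcases mul_eq_zero.1 r2 with e' | e'
      · linarith
      · have := honline b hb e'
        have e1 : ν = 1 := by linarith
        rw [e1, lrp_one, this] at hν
        exact hw'z hν
    · have hza := honline a ha e
      rcases mul_eq_zero.1 r2 with e' | e'
      · rw [e', lrp_zero, hza] at hν
        exact hw'z hν
      · have hzb := honline b hb e'
        exact hab (hza.trans hzb.symm)
  obtain ⟨s, hsS, hsf, hsZ⟩ := hex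
  have hk1 : (1 + k) ≠ 0 := by linarith
  have hrep : ∀ v, v = cb x0 (lrp x1 c (1 / (1 + k))) x1 (A v) (G v * (1 + k))
      (B v - k * G v) := by
    intro v
    conv_lhs => rw [hrep0 v]
    ext
    · simp only [cb, lrp]; field_simp; ring
    · simp only [cb, lrp]; field_simp; ring
  have hrs : ∀ v, A v + G v * (1 + k) + (B v - k * G v) = 1 := by
    intro v; have := hsum v; linarith
  have hn : ¬ (0 < A s ∧ 0 < G s * (1 + k)) := by
    rintro ⟨x, y⟩
    have y' : 0 < G s := (pos_iff_pos_of_mul_pos y).2 (by linarith)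
    have hkG := mul_nonneg hk y'.le
    have := hmax s ⟨hsS, y', x.le, by linarith⟩
    rw [div_le_iff₀ y'] at this
    linarith
  obtain ⟨t, ht0', ht1', θ, hθ0, hθ1, hcase⟩ := half_chord (hrep w') (hrep s) (hrs w') (hrs s)
    hAw (mul_pos hGw (by linarith)) hZw.ge hsZ hn
  have hwf2 : lrp w' s t ∈ segment ℝ a b :=
    (convex_segment a b).segment_subset hwf hsf (lrp_mem ht0' ht1')
  have onG : ∀ x : ℝ, 0 < x → x < 1 → lrp c d x ∉ segment ℝ a b := by
    intro x hx0 hx1 hx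
    rcases (h.nc c d a b _ hg hf (Ne.symm hfg) (lrp_mem hx0.le hx1.le) hx).1 with e | e
    · have := lrp_inj (e.trans (lrp_zero c d).symm) hcdne; linarith
    · have := lrp_inj (e.trans (lrp_one c d).symm) hcdne; linarith
  rcases hcase with e | e
  · rcases hθ0.eq_or_lt with h0 | h0
    · rw [e, ← h0, lrp_zero, hμ] at hwf2
      exact onG _ hμ0' hμ1' hwf2
    · rw [e, lrp_symm] at hwf2
      exact hfirst a b _ hf (by linarith) (by linarith) hwf2
  · have hk1' : 0 < 1 / (1 + k) := by positivity
    have hk2 : 1 / (1 + k) ≤ 1 := by rw [div_le_one (by linarith)]; linarith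
    have ee : lrp x1 (lrp x1 c (1 / (1 + k))) θ = lrp c d (μ * (1 - θ * (1 / (1 + k)))) := by
      rw [hμ]; ext <;> simp only [lrp] <;> ring
    rw [e, ee] at hwf2
    have h5 : θ * (1 / (1 + k)) < 1 := by nlinarith
    have h6 : 0 ≤ θ * (1 / (1 + k)) := mul_nonneg hθ0 hk1'.le
    exact onG _ (mul_pos hμ0' (by linarith)) (by nlinarith) hwf2

lemma tri_exists {S M} (h : PM S M) {p q : Pt} (he : s(p, q) ∈ M)
    (hw : ∃ w ∈ S, 0 < ori p q w) :
    ∃ r ∈ S, 0 < ori p q r ∧ ∀ c d w, s(c, d) ∈ M → w ∈ segment ℝ c d →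
      ¬ (0 < ori p q w ∧ 0 < ori q r w ∧ 0 < ori r p w) := by
  obtain ⟨hp, hq, hpq⟩ := h.ed _ _ he
  obtain ⟨w, hwS, hw⟩ := hw
  obtain ⟨l, hl0, hl1, hgen⟩ := generic_x0 h hp hq hpq
  obtain ⟨z, hz, hzp, hvis⟩ := vis_exists h he hwS hw hgen
  exact tri_of_vis h he hl0 hl1 hz hzp hvis

lemma segOf_mk (a b : Pt) : segOf s(a, b) = segment ℝ a b := rfl

lemma mem_epts (a b w : Pt) : w ∈ epts s(a, b) ↔ w = a ∨ w = b := by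
  simp [epts]

lemma collinear_of_ori {a b c : Pt} (hab : a ≠ b) (h : ori a b c = 0) :
    Collinear ℝ ({a, b, c} : Set Pt) := by
  rw [collinear_iff_of_mem (p₀ := a) (by simp)]
  refine ⟨b - a, ?_⟩
  have key : ∃ t : ℝ, c = t • (b - a) + a := by
    simp only [ori] at h
    by_cases h1 : b.1 - a.1 = 0
    · have h2 : b.2 - a.2 ≠ 0 := by
        intro h2; apply hab; ext <;> linarith
      have h3 : c.1 - a.1 = 0 := by
        rw [h1] at h
        have : (b.2 - a.2) * (c.1 - a.1) = 0 := by linarith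
        exact (mul_eq_zero.1 this).resolve_left h2
      refine ⟨(c.2 - a.2) / (b.2 - a.2), ?_⟩
      ext
      · simp [h1]; linarith
      · simp; field_simp; ring
    · refine ⟨(c.1 - a.1) / (b.1 - a.1), ?_⟩
      ext
      · simp; field_simp; ring
      · simp; field_simp; linarith
  intro p hp
  simp only [Set.mem_insert_iff, Set.mem_singleton_iff] at hp
  simp only [vadd_eq_add]
  rcases hp with rfl | rfl | rfl
  · exact ⟨0, by simp⟩
  · exact ⟨1, by simp⟩
  · exact key

lemma genpos_ori {S : Finset Pt} (h : GenPos S) : ∀ a ∈ S, ∀ b ∈ S, ∀ c ∈ S, a ≠ b → a ≠ c →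
    b ≠ c → ori a b c ≠ 0 := by
  intro a ha b hb c hc hab hac hbc h0
  exact h a ha b hb c hc hab hac hbc (collinear_of_ori hab h0)

lemma pm_of {S : Finset Pt} {M : Finset (Sym2 Pt)} (h : GenPos S)
    (h1 : ∀ e ∈ M, ¬ e.IsDiag ∧ ∀ p ∈ e, p ∈ S) (h2 : NoCross M) : PM S M := by
  refine ⟨genpos_ori h, ?_, ?_⟩
  · intro a b he
    obtain ⟨x, y⟩ := h1 _ he
    exact ⟨y a (by simp), y b (by simp), by simpa using x⟩
  · intro a b c d w he hf hne hwe hwf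
    have := h2 _ he _ hf hne ⟨hwe, hwf⟩
    exact ⟨(mem_epts _ _ _).1 this.1, (mem_epts _ _ _).1 this.2⟩

/-- a crossing in general position is a proper crossing -/
lemma proper_cross {S : Finset Pt}
    (hg : ∀ a ∈ S, ∀ b ∈ S, ∀ c ∈ S, a ≠ b → a ≠ c → b ≠ c → ori a b c ≠ 0)
    {a b c d : Pt} (ha : a ∈ S) (hb : b ∈ S) (hc : c ∈ S) (hd : d ∈ S) (hab : a ≠ b) (hcd : c ≠ d)
    (hne : s(a, b) ≠ s(c, d)) (hx : ¬ NoCrossPair s(a, b) s(c, d)) :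
    ∃ t u, 0 < t ∧ t < 1 ∧ 0 < u ∧ u < 1 ∧ lrp a b t = lrp c d u ∧
      ((0 < ori a b c ∧ ori a b d < 0) ∨ (ori a b c < 0 ∧ 0 < ori a b d)) := by
  have gen0 : ∀ {a b c : Pt}, a ∈ S → b ∈ S → c ∈ S → a ≠ b → ori a b c = 0 → c = a ∨ c = b := by
    intro a b c ha hb hc hab h0
    by_contra hn
    push Not at hn
    exact hg a ha b hb c hc hab (Ne.symm hn.1) (Ne.symm hn.2) h0
  simp only [NoCrossPair, Set.not_subset] at hx
  obtain ⟨w, ⟨hw1, hw2⟩, hw3⟩ := hx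
  rw [segOf_mk] at hw1 hw2
  rw [Set.mem_inter_iff, mem_epts, mem_epts] at hw3
  -- points of S on the edges are endpoints
  have hwS : w ∉ S := by
    intro hwS
    exact hw3 ⟨gen0 ha hb hwS hab (ori_seg_zero hw1), gen0 hc hd hwS hcd (ori_seg_zero hw2)⟩
  obtain ⟨t, ht0, ht1, ht⟩ := mem_seg.1 hw1
  obtain ⟨u, hu0, hu1, hu⟩ := mem_seg.1 hw2
  have strict : ∀ {x y : Pt} {t : ℝ}, x ∈ S → y ∈ S → w = lrp x y t → 0 ≤ t → t ≤ 1 →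
      0 < t ∧ t < 1 := by
    intro x y t hx hy e h0 h1
    constructor
    · rcases h0.eq_or_lt with r | r
      · rw [← r, lrp_zero] at e; exact absurd (e ▸ hx) hwS
      · exact r
    · rcases h1.eq_or_lt with r | r
      · rw [r, lrp_one] at e; exact absurd (e ▸ hy) hwS
      · exact r
  obtain ⟨t0, t1⟩ := strict ha hb ht ht0 ht1
  obtain ⟨u0, u1⟩ := strict hc hd hu hu0 hu1
  refine ⟨t, u, t0, t1, u0, u1, ht.symm.trans hu, ?_⟩
  have hz := ori_seg_zero hw1
  rw [hu, ori_lrp] at hz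
  have hc0 : ori a b c ≠ 0 := by
    intro h0
    rw [h0] at hz
    have hd0 : ori a b d = 0 := by
      have : u * ori a b d = 0 := by linarith
      exact (mul_eq_zero.1 this).resolve_left u0.ne'
    have e1 := gen0 ha hb hc hab h0
    have e2 := gen0 ha hb hd hab hd0
    apply hne
    rcases e1 with rfl | rfl <;> rcases e2 with rfl | rfl
    · exact absurd rfl hcd
    · rfl
    · exact Sym2.eq_swap
    · exact absurd rfl hcd
  rcases lt_or_gt_of_ne hc0 with hlt | hgt
  · right
    refine ⟨hlt, ?_⟩
    have := mul_pos (sub_pos.2 u1) (neg_pos.2 hlt)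
    exact (pos_iff_pos_of_mul_pos (a := u) (by linarith)).1 u0
  · left
    refine ⟨hgt, ?_⟩
    have := mul_pos (sub_pos.2 u1) hgt
    have := (pos_iff_pos_of_mul_pos (a := u) (b := - ori a b d) (by linarith)).1 u0
    linarith

lemma small_pos {a b a' b' : ℝ} (ha : 0 < a) (hb : 0 < b) :
    ∃ ε, 0 < ε ∧ ε ≤ 1 ∧ 0 < (1 - ε) * a + ε * a' ∧ 0 < (1 - ε) * b + ε * b' := by
  have h1 : ∃ ε, 0 < ε ∧ ε ≤ 1 ∧ ε * (|a'| + a) < a ∧ ε * (|b'| + b) < b := by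
    have p1 : 0 < |a'| + a := by positivity
    have p2 : 0 < |b'| + b := by positivity
    refine ⟨min (a / (2 * (|a'| + a))) (b / (2 * (|b'| + b))), by positivity, ?_, ?_, ?_⟩
    · apply (min_le_left _ _).trans
      rw [div_le_one (by positivity)]
      have := abs_nonneg a'
      linarith
    · calc _ ≤ a / (2 * (|a'| + a)) * (|a'| + a) :=
            mul_le_mul_of_nonneg_right (min_le_left _ _) p1.le
        _ = a / 2 := by field_simp
        _ < a := by linarith
    · calc _ ≤ b / (2 * (|b'| + b)) * (|b'| + b) :=
            mul_le_mul_of_nonneg_right (min_le_right _ _) p2.le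
        _ = b / 2 := by field_simp
        _ < b := by linarith
  obtain ⟨ε, h0, h1, h2, h3⟩ := h1
  refine ⟨ε, h0, h1, ?_, ?_⟩
  · have := mul_le_mul_of_nonneg_left (neg_abs_le a') h0.le
    linarith
  · have := mul_le_mul_of_nonneg_left (neg_abs_le b') h0.le
    linarith

/-- the sides of a clean triangle do not cross edges -/
lemma clean_side {S M} (h : PM S M) {p q r : Pt} (hp : p ∈ S) (hr : r ∈ S)
    (hpos : 0 < ori p q r)
    (hcl : ∀ c d w, s(c, d) ∈ M → w ∈ segment ℝ c d →
      ¬ (0 < ori p q w ∧ 0 < ori q r w ∧ 0 < ori r p w))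
    {c d : Pt} (hf : s(c, d) ∈ M) (hne : s(r, p) ≠ s(c, d)) : NoCrossPair s(r, p) s(c, d) := by
  by_contra hx
  obtain ⟨hc, hd, hcd⟩ := h.ed _ _ hf
  have hrp : r ≠ p := by
    rintro rfl; rw [ori_self_left] at hpos; exact lt_irrefl _ hpos
  obtain ⟨t, u, t0, t1, u0, u1, e, hs⟩ := proper_cross h.gen hr hp hc hd hrp hcd hne hx
  have hs' : ∃ x, x ∈ segment ℝ c d ∧ 0 < ori r p x := by
    rcases hs with hs | hs
    · exact ⟨c, left_mem_segment _ _ _, hs.1⟩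
    · exact ⟨d, right_mem_segment _ _ _, hs.2⟩
  obtain ⟨x, hxf, hx0⟩ := hs'
  set w := lrp r p t with hw
  have hwf : w ∈ segment ℝ c d := by rw [e]; exact lrp_mem u0.le u1.le
  have a1 : 0 < ori p q w := by
    rw [hw, ori_lrp, ori_self_left]; have := mul_pos (sub_pos.2 t1) hpos; linarith
  have a2 : 0 < ori q r w := by
    rw [hw, ori_lrp, ori_self_right, ori_rot p q r]; have := mul_pos t0 hpos; linarith
  have a3 : ori r p w = 0 := by rw [hw, ori_lrp, ori_self_left, ori_self_right]; ring
  obtain ⟨ε, h0, h1, h2, h3⟩ := small_pos (a' := ori p q x) (b' := ori q r x) a1 a2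
  refine hcl c d (lrp w x ε) hf ?_ ⟨?_, ?_, ?_⟩
  · exact (convex_segment c d).segment_subset hwf hxf (lrp_mem h0.le h1)
  · rw [ori_lrp]; exact h2
  · rw [ori_lrp]; exact h3
  · rw [ori_lrp, a3]; have := mul_pos h0 hx0; linarith

lemma noCrossPair_symm {e f : Sym2 Pt} (h : NoCrossPair e f) : NoCrossPair f e := by
  intro w hw
  exact (h hw.symm).symm

lemma hull_ori_nonneg {p q r x y : Pt} (h1 : 0 ≤ ori x y p) (h2 : 0 ≤ ori x y q)
    (h3 : 0 ≤ ori x y r) : ∀ w ∈ convexHull ℝ ({p, q, r} : Set Pt), 0 ≤ ori x y w := by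
  have hconv : Convex ℝ {w : Pt | 0 ≤ ori x y w} := by
    intro a ha b hb s t hs ht hst
    simp only [Set.mem_setOf_eq] at *
    have : s • a + t • b = lrp a b t := by
      have : s = 1 - t := by linarith
      subst this
      ext <;> simp [lrp] <;> ring
    rw [this, ori_lrp]
    have : 0 ≤ 1 - t := by linarith
    positivity
  intro w hw
  refine convexHull_min ?_ hconv hw
  intro v hv
  simp only [Set.mem_insert_iff, Set.mem_singleton_iff] at hv
  rcases hv with rfl | rfl | rfl <;> assumption

/-- on interior points of the triangle a nonnegative nonconstant functional is positive -/
lemma triInt_pos {p q r x y : Pt} (hxy : x ≠ y) (h1 : 0 ≤ ori x y p) (h2 : 0 ≤ ori x y q)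
    (h3 : 0 ≤ ori x y r) : ∀ w ∈ triInt p q r, 0 < ori x y w := by
  intro w hw
  rw [triInt, mem_interior_iff_mem_nhds] at hw
  -- direction of decrease
  set v : Pt := (y.2 - x.2, -(y.1 - x.1)) with hv
  have hcont : Filter.Tendsto (fun ε : ℝ => w + ε • v) (nhds 0) (nhds w) := by
    have : Continuous (fun ε : ℝ => w + ε • v) := by fun_prop
    have := this.tendsto 0
    simpa using this
  have hev := hcont.eventually hw
  rw [Metric.eventually_nhds_iff] at hev
  obtain ⟨δ, hδ, hev⟩ := hev
  have := hull_ori_nonneg h1 h2 h3 _ (hev (y := δ / 2) (by simp [abs_of_pos hδ]; linarith))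
  have e : ori x y (w + (δ / 2) • v)
      = ori x y w - δ / 2 * ((y.1 - x.1) ^ 2 + (y.2 - x.2) ^ 2) := by
    simp only [ori, hv]; simp; ring
  rw [e] at this
  have hp : 0 < (y.1 - x.1) ^ 2 + (y.2 - x.2) ^ 2 := by
    by_contra hn
    apply hxy
    have a := sq_nonneg (y.1 - x.1)
    have b := sq_nonneg (y.2 - x.2)
    have a0 : (y.1 - x.1) ^ 2 = 0 := by linarith
    have b0 : (y.2 - x.2) ^ 2 = 0 := by linarith
    have a1 := pow_eq_zero_iff (two_ne_zero) |>.1 a0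
    have b1 := pow_eq_zero_iff (two_ne_zero) |>.1 b0
    ext <;> linarith
  have := mul_pos (half_pos hδ) hp
  linarith

lemma triInt_sub {p q r : Pt} (h : 0 < ori p q r) : ∀ w ∈ triInt p q r,
    0 < ori p q w ∧ 0 < ori q r w ∧ 0 < ori r p w := by
  intro w hw
  have hpq : p ≠ q := by rintro rfl; rw [ori_same] at h; exact lt_irrefl _ h
  have hqr : q ≠ r := by rintro rfl; rw [ori_self_right] at h; exact lt_irrefl _ h
  have hrp : r ≠ p := by rintro rfl; rw [ori_self_left] at h; exact lt_irrefl _ h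
  have z1 := ori_self_left
  have z2 := ori_self_right
  have h' : ori q r p = ori p q r := ori_rot _ _ _
  have h'' : ori r p q = ori p q r := by rw [← h', ori_rot]
  refine ⟨triInt_pos hpq ?_ ?_ ?_ w hw, triInt_pos hqr ?_ ?_ ?_ w hw, triInt_pos hrp ?_ ?_ ?_ w hw⟩
  all_goals first | (rw [z1]) | (rw [z2]) | (rw [h']; exact h.le) | (rw [h'']; exact h.le) | exact h.le

lemma triInt_comm (p q r : Pt) : triInt p q r = triInt q p r := by
  unfold triInt; rw [Set.insert_comm]

lemma triInt_comm' (p q r : Pt) : triInt p q r = triInt p r q := by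
  unfold triInt; rw [Set.pair_comm]



abbrev Cn (E : Finset (Sym2 Pt)) (p q : Pt) : Prop :=
  Relation.ReflTransGen (fun a b => s(a, b) ∈ E) p q

lemma Cn.symm' {E : Finset (Sym2 Pt)} {p q : Pt} (h : Cn E p q) : Cn E q p := by
  induction h with
  | refl => exact Relation.ReflTransGen.refl
  | @tail b c hb hbc ih =>
    refine Relation.ReflTransGen.head ?_ ih
    rwa [Sym2.eq_swap]

lemma Cn.mono {E F : Finset (Sym2 Pt)} (hEF : E ⊆ F) {p q : Pt} (h : Cn E p q) : Cn F p q := by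
  induction h with
  | refl => exact Relation.ReflTransGen.refl
  | @tail b c hb hbc ih => exact ih.tail (hEF hbc)

lemma conn_card {S : Finset Pt} {E : Finset (Sym2 Pt)} (hed : ∀ e ∈ E, ∀ p ∈ e, p ∈ S)
    (hne : S.Nonempty) (hc : ∀ p ∈ S, ∀ q ∈ S, Cn E p q) : S.card ≤ E.card + 1 := by
  let G : SimpleGraph S := SimpleGraph.fromRel (fun a b => s(a.1, b.1) ∈ E)
  have key : ∀ p : S, ∀ y, Cn E p.1 y → ∃ hy : y ∈ S, G.Reachable p ⟨y, hy⟩ := by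
    intro p y h
    induction h with
    | refl => exact ⟨p.2, SimpleGraph.Reachable.refl _⟩
    | @tail b c hb hbc ih =>
      obtain ⟨hb', ih⟩ := ih
      have hc' : c ∈ S := hed _ hbc c (by simp)
      refine ⟨hc', ih.trans ?_⟩
      by_cases e : b = c
      · subst e; exact SimpleGraph.Reachable.refl _
      · apply SimpleGraph.Adj.reachable
        simp only [G, SimpleGraph.fromRel_adj]
        refine ⟨by simpa using e, Or.inl hbc⟩
  have hG : G.Connected := by
    haveI : Nonempty S := hne.to_subtype
    refine SimpleGraph.Connected.mk ?_
    intro a b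
    obtain ⟨_, h⟩ := key a b.1 (hc a.1 a.2 b.1 b.2)
    exact h
  have h1 := hG.card_vert_le_card_edgeSet_add_one
  have h2 : Nat.card G.edgeSet ≤ E.card := by
    have : Nat.card E = E.card := by simp
    rw [← this]
    let f : G.edgeSet → E := fun e => ⟨Sym2.map Subtype.val e.1, by
      obtain ⟨e, he⟩ := e
      induction e using Sym2.ind with
      | _ a b =>
        simp only [SimpleGraph.mem_edgeSet, G, SimpleGraph.fromRel_adj] at he
        simp only [Sym2.map_mk]
        rcases he.2 with h | h
        · exact h
        · rw [Sym2.eq_swap]; exact h⟩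
    apply Nat.card_le_card_of_injective f
    intro x y hxy
    simp only [f, Subtype.mk.injEq] at hxy
    exact Subtype.ext (Sym2.map.injective Subtype.val_injective hxy)
  have h3 : Nat.card S = S.card := by simp
  omega

lemma exch {S : Finset Pt} {E : Finset (Sym2 Pt)} (hed : ∀ e ∈ E, ∀ p ∈ e, p ∈ S)
    (hcard : E.card + 1 = S.card) (hc : ∀ p ∈ S, ∀ q ∈ S, Cn E p q) {p q r : Pt}
    (he : s(p, q) ∈ E) (hr : r ∈ S) (hrp : r ≠ p) (hrq : r ≠ q) :
    (s(p, r) ∉ E ∧ ∀ x ∈ S, ∀ y ∈ S, Cn (insert s(p, r) (E.erase s(p, q))) x y) ∨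
    (s(q, r) ∉ E ∧ ∀ x ∈ S, ∀ y ∈ S, Cn (insert s(q, r) (E.erase s(p, q))) x y) := by
  set E' := E.erase s(p, q) with hE'
  have hp : p ∈ S := hed _ he p (by simp)
  have hq : q ∈ S := hed _ he q (by simp)
  have key : ∀ x, Cn E p x → Cn E' p x ∨ Cn E' q x := by
    intro x h
    induction h with
    | refl => exact Or.inl Relation.ReflTransGen.refl
    | @tail b c hb hbc ih =>
      by_cases e : s(b, c) = s(p, q)
      · rw [Sym2.eq_iff] at e
        rcases e with ⟨rfl, rfl⟩ | ⟨rfl, rfl⟩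
        · exact Or.inr Relation.ReflTransGen.refl
        · exact Or.inl Relation.ReflTransGen.refl
      · have : s(b, c) ∈ E' := Finset.mem_erase.2 ⟨e, hbc⟩
        rcases ih with ih | ih
        · exact Or.inl (ih.tail this)
        · exact Or.inr (ih.tail this)
  have hnot : ¬ Cn E' p q := by
    intro hpq
    have hall : ∀ x ∈ S, Cn E' p x := by
      intro x hx
      rcases key x (hc p hp x hx) with h | h
      · exact h
      · exact hpq.trans h
    have := conn_card (S := S) (E := E') (fun e he => hed e (Finset.mem_of_mem_erase he)) ⟨p, hp⟩
      (fun x hx y hy => (hall x hx).symm'.trans (hall y hy))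
    have h2 : E'.card < E.card := Finset.card_erase_lt_of_mem he
    omega
  have fin : ∀ F : Finset (Sym2 Pt), E' ⊆ F → Cn F p q → ∀ x ∈ S, ∀ y ∈ S, Cn F x y := by
    intro F hF hpq
    have hall : ∀ x ∈ S, Cn F p x := by
      intro x hx
      rcases key x (hc p hp x hx) with h | h
      · exact h.mono hF
      · exact hpq.trans (h.mono hF)
    exact fun x hx y hy => (hall x hx).symm'.trans (hall y hy)
  rcases key r (hc p hp r hr) with h | h
  · right
    constructor
    · intro hm
      apply hnot
      apply h.tail
      rw [Sym2.eq_swap]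
      refine Finset.mem_erase.2 ⟨?_, hm⟩
      intro e
      rw [Sym2.eq_iff] at e
      rcases e with ⟨_, h2⟩ | ⟨_, h2⟩
      · exact hrq h2
      · exact hrp h2
    · apply fin _ (Finset.subset_insert _ _)
      apply (h.mono (Finset.subset_insert _ _)).tail
      rw [Sym2.eq_swap]
      exact Finset.mem_insert_self _ _
  · left
    constructor
    · intro hm
      apply hnot
      apply Cn.symm'
      apply h.tail
      rw [Sym2.eq_swap]
      refine Finset.mem_erase.2 ⟨?_, hm⟩
      intro e
      rw [Sym2.eq_iff] at e
      rcases e with ⟨_, h2⟩ | ⟨_, h2⟩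
      · exact hrq h2
      · exact hrp h2
    · apply fin _ (Finset.subset_insert _ _)
      apply Cn.symm'
      apply (h.mono (Finset.subset_insert _ _)).tail
      rw [Sym2.eq_swap]
      exact Finset.mem_insert_self _ _

section reach
variable {α : Type*} {step : α → α → Prop}

lemma reaches_refl (m : ℕ) (x : α) : ReachesIn step m x x :=
  ⟨0, Nat.zero_le _, fun _ => x, rfl, rfl, fun i hi => absurd hi (Nat.not_lt_zero _)⟩

lemma reaches_mono {m m' : ℕ} {x y : α} (h : ReachesIn step m x y) (hm : m ≤ m') :
    ReachesIn step m' x y := by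
  obtain ⟨k, hk, f, h⟩ := h
  exact ⟨k, hk.trans hm, f, h⟩

lemma reaches_trans {m m' : ℕ} {x y z : α} (h : ReachesIn step m x y)
    (h' : ReachesIn step m' y z) : ReachesIn step (m + m') x z := by
  obtain ⟨k, hk, f, f0, fk, fs⟩ := h
  obtain ⟨k', hk', g, g0, gk, gs⟩ := h'
  refine ⟨k + k', by omega, fun i => if i < k then f i else g (i - k), ?_, ?_, ?_⟩
  · by_cases hk0 : 0 < k
    · simp [hk0, f0]
    · have : k = 0 := by omega
      subst this
      simp [g0, ← fk, f0]
  · simp [gk]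
  · intro i hi
    dsimp only
    by_cases h1 : i + 1 < k
    · rw [if_pos h1, if_pos (by omega)]; exact fs i (by omega)
    · by_cases h2 : i < k
      · rw [if_pos h2, if_neg h1]
        have : i + 1 = k := by omega
        have e : i + 1 - k = 0 := by omega
        rw [e, g0, ← fk, ← this]
        exact fs i h2
      · rw [if_neg h1, if_neg h2]
        have e : i + 1 - k = (i - k) + 1 := by omega
        rw [e]
        exact gs _ (by omega)

lemma reaches_one {x y : α} (h : step x y) : ReachesIn step 1 x y := by
  refine ⟨1, le_rfl, fun i => if i = 0 then x else y, by simp, by simp, ?_⟩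
  intro i hi
  have : i = 0 := by omega
  subst this
  simpa using h

lemma reaches_symm (hs : ∀ x y, step x y → step y x) {m : ℕ} {x y : α}
    (h : ReachesIn step m x y) : ReachesIn step m y x := by
  obtain ⟨k, hk, f, f0, fk, fs⟩ := h
  refine ⟨k, hk, fun i => f (k - i), by simpa, by simpa, ?_⟩
  intro i hi
  have := fs (k - (i + 1)) (by omega)
  have e : k - (i + 1) + 1 = k - i := by omega
  rw [e] at this
  exact hs _ _ this

lemma reaches_map {β : Type*} {step' : β → β → Prop} (g : α → β)
    (hs : ∀ x y, step x y → step' (g x) (g y)) {m : ℕ} {x y : α}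
    (h : ReachesIn step m x y) : ReachesIn step' m (g x) (g y) := by
  obtain ⟨k, hk, f, f0, fk, fs⟩ := h
  exact ⟨k, hk, fun i => g (f i), by simp [f0], by simp [fk], fun i hi => hs _ _ (fs i hi)⟩

end reach

lemma etr_symm {S : Finset Pt} (E F : Finset (Sym2 Pt)) (h : EmptyTriRot S E F) :
    EmptyTriRot S F E := by
  obtain ⟨h1, h2, p, q, r, h3, h4, h5⟩ := h
  refine ⟨h2, h1, p, r, q, h4, h3, ?_⟩
  intro g hg
  rw [triInt_comm']
  rw [Finset.union_comm] at hg
  exact h5 g hg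

/-- building an empty-triangle rotation inside a clean noncrossing set -/
lemma etr_of {S : Finset Pt} {M E : Finset (Sym2 Pt)} (hM : PM S M)
    (hE : IsPST S E) (hEM : E ⊆ M) {p q r : Pt} (he : s(p, q) ∈ E) (hpr : s(p, r) ∈ M)
    (hpn : s(p, r) ∉ E)
    (hcn : ∀ x ∈ S, ∀ y ∈ S, Cn (insert s(p, r) (E.erase s(p, q))) x y)
    (hncM : NoCross M)
    (hcl : ∀ c d, s(c, d) ∈ M → ∀ w ∈ segment ℝ c d, w ∉ triInt p q r) :
    EmptyTriRot S E (insert s(p, r) (E.erase s(p, q))) := by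
  obtain ⟨h1, h2, h3, h4⟩ := hE
  have hne : s(p, q) ≠ s(p, r) := by rintro h; rw [h] at he; exact hpn he
  have hsub : insert s(p, r) (E.erase s(p, q)) ⊆ M := by
    intro e hm
    rcases Finset.mem_insert.1 hm with rfl | hm
    · exact hpr
    · exact hEM (Finset.mem_of_mem_erase hm)
  refine ⟨⟨h1, h2, h3, h4⟩, ⟨?_, ?_, ?_, hcn⟩, p, q, r, ?_, ?_, ?_⟩
  · intro e hm
    rcases Finset.mem_insert.1 hm with rfl | hm
    · obtain ⟨a, b, c⟩ := hM.ed _ _ hpr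
      refine ⟨by simpa using c, ?_⟩
      intro x hx
      simp only [Sym2.mem_iff] at hx
      rcases hx with rfl | rfl <;> assumption
    · exact h1 e (Finset.mem_of_mem_erase hm)
  · intro e he' f hf hef
    exact hncM e (hsub he') f (hsub hf) hef
  · rw [Finset.card_insert_of_notMem (fun h => hpn (Finset.mem_of_mem_erase h)),
      Finset.card_erase_add_one he]
    exact h3
  · ext e
    simp only [Finset.mem_sdiff, Finset.mem_insert, Finset.mem_erase, Finset.mem_singleton]
    constructor
    · rintro ⟨a, b⟩
      by_contra hn
      exact b (Or.inr ⟨hn, a⟩)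
    · rintro rfl
      exact ⟨he, by tauto⟩
  · ext e
    simp only [Finset.mem_sdiff, Finset.mem_insert, Finset.mem_erase, Finset.mem_singleton]
    constructor
    · rintro ⟨a, b⟩
      tauto
    · rintro rfl
      exact ⟨Or.inl rfl, hpn⟩
  · intro g hg
    have hgM : g ∈ M := by
      rcases Finset.mem_union.1 hg with h | h
      · exact hEM h
      · exact hsub h
    induction g using Sym2.ind with
    | _ c d =>
      rw [segOf_mk, Set.disjoint_left]
      exact hcl c d hgM


def phi (t : ℝ) (p : Pt) : ℝ := p.1 + t * p.2

structure Spl (S L R : Finset Pt) (t c : ℝ) : Prop where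
  lS : ∀ p ∈ L, p ∈ S
  rS : ∀ p ∈ R, p ∈ S
  lc : ∀ p ∈ L, phi t p < c
  rc : ∀ p ∈ R, c < phi t p
  cov : ∀ p ∈ S, p ∈ L ∨ p ∈ R
  inj : ∀ p ∈ S, ∀ q ∈ S, phi t p = phi t q → p = q

lemma exists_dir (S : Finset Pt) : ∃ t : ℝ, ∀ p ∈ S, ∀ q ∈ S, phi t p = phi t q → p = q := by
  have hfin : (⋃ a ∈ S, ⋃ b ∈ S, {t : ℝ | a ≠ b ∧ phi t a = phi t b}).Finite := by
    apply Set.Finite.biUnion S.finite_toSet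
    intro a ha
    apply Set.Finite.biUnion S.finite_toSet
    intro b hb
    apply Set.Subsingleton.finite
    rintro x ⟨hx, hx'⟩ y ⟨_, hy'⟩
    simp only [phi] at hx' hy'
    by_contra hxy
    apply hx
    have e : (x - y) * (a.2 - b.2) = 0 := by linarith
    have h2 : a.2 = b.2 := by
      rcases mul_eq_zero.1 e with h | h
      · exact absurd (by linarith) hxy
      · linarith
    rw [h2] at hx'
    exact Prod.ext (by linarith) h2
  obtain ⟨t, ht⟩ := hfin.exists_notMem
  refine ⟨t, ?_⟩
  intro p hp q hq h
  by_contra hn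
  apply ht
  simp only [Set.mem_iUnion]
  exact ⟨p, hp, q, hq, hn, h⟩

lemma exists_spl (S : Finset Pt) (k : ℕ) (hk : 1 ≤ k) (hk' : k < S.card) :
    ∃ L R t c, Spl S L R t c ∧ L.card = k ∧ R.card = S.card - k := by
  obtain ⟨t, ht⟩ := exists_dir S
  have key : ∀ k ≤ S.card, ∃ L ⊆ S, L.card = k ∧ ∀ p ∈ L, ∀ q ∈ S \ L, phi t p < phi t q := by
    intro k
    induction k with
    | zero => intro _; exact ⟨∅, by simp, by simp, by simp⟩
    | succ k ih =>
      intro hk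
      obtain ⟨L, hLS, hLc, hL⟩ := ih (by omega)
      have hne : (S \ L).Nonempty := by
        rw [← Finset.card_pos, Finset.card_sdiff_of_subset hLS]; omega
      obtain ⟨m, hm, hmin⟩ := Finset.exists_min_image (S \ L) (phi t) hne
      have hm' := Finset.mem_sdiff.1 hm
      refine ⟨insert m L, ?_, ?_, ?_⟩
      · intro x hx
        rcases Finset.mem_insert.1 hx with rfl | hx
        · exact hm'.1
        · exact hLS hx
      · rw [Finset.card_insert_of_notMem hm'.2, hLc]
      · intro p hp q hq
        have hq' := Finset.mem_sdiff.1 hq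
        have hq1 : q ∉ L := fun h => hq'.2 (Finset.mem_insert_of_mem h)
        have hq2 : q ∈ S \ L := Finset.mem_sdiff.2 ⟨hq'.1, hq1⟩
        rcases Finset.mem_insert.1 hp with rfl | hp
        · refine lt_of_le_of_ne (hmin q hq2) ?_
          intro e
          have := ht _ hm'.1 _ hq'.1 e
          subst this
          exact hq'.2 (Finset.mem_insert_self _ _)
        · exact hL p hp q hq2
  obtain ⟨L, hLS, hLc, hL⟩ := key k hk'.le
  have hcR : (S \ L).card = S.card - k := by rw [Finset.card_sdiff_of_subset hLS, hLc]
  have hLn : L.Nonempty := by rw [← Finset.card_pos]; omega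
  have hRn : (S \ L).Nonempty := by rw [← Finset.card_pos]; omega
  obtain ⟨a, ha, hamax⟩ := Finset.exists_max_image L (phi t) hLn
  obtain ⟨b, hb, hbmin⟩ := Finset.exists_min_image (S \ L) (phi t) hRn
  have hab := hL a ha b hb
  refine ⟨L, S \ L, t, (phi t a + phi t b) / 2, ⟨fun p hp => hLS hp,
    fun p hp => (Finset.mem_sdiff.1 hp).1, ?_, ?_, ?_, ht⟩, hLc, hcR⟩
  · intro p hp
    have := hamax p hp
    linarith
  · intro p hp
    have := hbmin p hp
    linarith
  · intro p hp
    by_cases h : p ∈ L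
    · exact Or.inl h
    · exact Or.inr (Finset.mem_sdiff.2 ⟨hp, h⟩)

lemma ori_phi (t : ℝ) (p q r : Pt) :
    ori p q r = (phi t q - phi t p) * (r.2 - p.2) - (q.2 - p.2) * (phi t r - phi t p) := by
  simp only [ori, phi]; ring

lemma phi_lrp (t : ℝ) (p q : Pt) (θ : ℝ) :
    phi t (lrp p q θ) = phi t p + θ * (phi t q - phi t p) := by
  simp only [lrp, phi]; ring

def ht (t c : ℝ) (p q : Pt) : ℝ := p.2 + (c - phi t p) / (phi t q - phi t p) * (q.2 - p.2)

def hw (t y c : ℝ) : Pt := (c - t * y, y)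

lemma ori_hw {t c : ℝ} {p q : Pt} (h : phi t p < phi t q) (y : ℝ) :
    ori p q (hw t y c) = (phi t q - phi t p) * (y - ht t c p q) := by
  have : phi t q - phi t p ≠ 0 := by linarith
  rw [ori_phi t]
  have e : phi t (hw t y c) = c := by simp only [phi, hw]; ring
  rw [e]
  simp only [ht, hw]
  field_simp
  ring

/-- point at abscissa `c` on the segment -/
lemma lrp_at {t c : ℝ} {p q : Pt} (hp : phi t p < c) (hq : c < phi t q) :
    ∃ θ, 0 < θ ∧ θ < 1 ∧ lrp p q θ = hw t (ht t c p q) c := by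
  have hpos : 0 < phi t q - phi t p := by linarith
  refine ⟨(c - phi t p) / (phi t q - phi t p), div_pos (by linarith) hpos,
    (div_lt_one hpos).2 (by linarith), ?_⟩
  have e2 : (lrp p q ((c - phi t p) / (phi t q - phi t p))).2 = ht t c p q := by
    simp only [lrp, ht]
  have e1 : phi t (lrp p q ((c - phi t p) / (phi t q - phi t p))) = c := by
    rw [phi_lrp]; field_simp; ring
  refine Prod.ext ?_ e2
  generalize lrp p q ((c - phi t p) / (phi t q - phi t p)) = w at e1 e2 ⊢
  simp only [phi] at e1
  rw [e2] at e1
  simp only [hw]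
  linarith

lemma ht_left {t c : ℝ} {p q r : Pt} (hp : phi t p < c) (hq : c < phi t q) (hr : phi t r < c)
    (h : 0 < ori p q r) : ht t c p q < ht t c r q := by
  obtain ⟨θ, h0, h1, e⟩ := lrp_at hp hq
  have e1 := ori_hw (t := t) (c := c) (p := r) (q := q) (by linarith) (ht t c p q)
  rw [← e, ori_lrp, ori_self_right, show ori r q p = - ori p q r by
    rw [ori_swap q r p, ori_rot]] at e1
  have : 0 < (1 - θ) * ori p q r := mul_pos (by linarith) h
  have h3 : (phi t q - phi t r) * (ht t c p q - ht t c r q) < 0 := by rw [← e1]; linarith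
  have h4 : 0 < phi t q - phi t r := by linarith
  by_contra hn
  have := mul_nonneg h4.le (show 0 ≤ ht t c p q - ht t c r q by linarith)
  linarith

lemma ht_right {t c : ℝ} {p q r : Pt} (hp : phi t p < c) (hq : c < phi t q) (hr : c < phi t r)
    (h : 0 < ori p q r) : ht t c p q < ht t c p r := by
  obtain ⟨θ, h0, h1, e⟩ := lrp_at hp hq
  have e1 := ori_hw (t := t) (c := c) (p := p) (q := r) (by linarith) (ht t c p q)
  rw [← e, ori_lrp, ori_self_left, show ori p r q = - ori p q r by
    rw [ori_swap r p q, ← ori_rot r p q]] at e1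
  have : 0 < θ * ori p q r := mul_pos (by linarith) h
  have h3 : (phi t r - phi t p) * (ht t c p q - ht t c p r) < 0 := by rw [← e1]; linarith
  have h4 : 0 < phi t r - phi t p := by linarith
  by_contra hn
  have := mul_nonneg h4.le (show 0 ≤ ht t c p q - ht t c p r by linarith)
  linarith

lemma ht_inj {S M t c} (h : PM S M) {p q p' q' : Pt} (hp : phi t p < c) (hq : c < phi t q)
    (hp' : phi t p' < c) (hq' : c < phi t q') (he : s(p, q) ∈ M) (he' : s(p', q') ∈ M)
    (hh : ht t c p q = ht t c p' q') : p = p' ∧ q = q' := by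
  obtain ⟨θ, h0, h1, e⟩ := lrp_at hp hq
  obtain ⟨θ', h0', h1', e'⟩ := lrp_at hp' hq'
  have hs : s(p, q) = s(p', q') := by
    by_contra hne
    have := (h.nc p q p' q' (hw t (ht t c p q) c) he he' hne (e ▸ lrp_mem h0.le h1.le)
      (by rw [hh, ← e']; exact lrp_mem h0'.le h1'.le)).1
    have ec : phi t (hw t (ht t c p q) c) = c := by simp only [phi, hw]; ring
    rcases this with h | h <;> rw [h] at ec <;> linarith
  rw [Sym2.eq_iff] at hs
  rcases hs with h | ⟨h, h2⟩
  · exact h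
  · subst h; linarith

lemma exists_bridge {S L R t c} (hs : Spl S L R t c)
    (hg : ∀ a ∈ S, ∀ b ∈ S, ∀ c ∈ S, a ≠ b → a ≠ c → b ≠ c → ori a b c ≠ 0)
    (hL : L.Nonempty) (hR : R.Nonempty) :
    ∃ l ∈ L, ∃ r ∈ R, (∀ p ∈ L, ∀ q ∈ R, ht t c p q ≤ ht t c l r) ∧
      ∀ s ∈ S, s ≠ l → s ≠ r → ori l r s < 0 := by
  obtain ⟨⟨l, r⟩, hm, hmax⟩ := Finset.exists_max_image (L ×ˢ R) (fun x => ht t c x.1 x.2)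
    (hL.product hR)
  obtain ⟨hl, hr⟩ := Finset.mem_product.1 hm
  simp only at hl hr
  have hmx : ∀ p ∈ L, ∀ q ∈ R, ht t c p q ≤ ht t c l r := fun p hp q hq =>
    hmax (p, q) (Finset.mem_product.2 ⟨hp, hq⟩)
  have hlc := hs.lc l hl
  have hrc := hs.rc r hr
  refine ⟨l, hl, r, hr, hmx, ?_⟩
  intro s hsS hsl hsr
  have h0 := hg l (hs.lS l hl) r (hs.rS r hr) s hsS (by rintro rfl; linarith) hsl.symm hsr.symm
  by_contra hn
  have hpos : 0 < ori l r s := lt_of_le_of_ne (not_lt.1 hn) h0.symm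
  rcases hs.cov s hsS with h | h
  · have := ht_left hlc hrc (hs.lc s h) hpos
    linarith [hmx s h r hr]
  · have := ht_right hlc hrc (hs.rc s h) hpos
    linarith [hmx l hl s h]

/-- a hull edge crosses nothing -/
lemma bridge_nocross {S : Finset Pt}
    (hg : ∀ a ∈ S, ∀ b ∈ S, ∀ c ∈ S, a ≠ b → a ≠ c → b ≠ c → ori a b c ≠ 0) {l r : Pt}
    (hl : l ∈ S) (hr : r ∈ S) (hlr : l ≠ r) (hb : ∀ s ∈ S, s ≠ l → s ≠ r → ori l r s < 0)
    {a b : Pt} (ha : a ∈ S) (hb' : b ∈ S) (hab : a ≠ b) (hne : s(l, r) ≠ s(a, b)) :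
    NoCrossPair s(l, r) s(a, b) := by
  by_contra hx
  obtain ⟨_, _, _, _, _, _, _, h⟩ := proper_cross hg hl hr ha hb' hlr hab hne hx
  have hle : ∀ s ∈ S, ori l r s ≤ 0 := by
    intro s hs
    by_cases h1 : s = l
    · rw [h1, ori_self_left]
    by_cases h2 : s = r
    · rw [h2, ori_self_right]
    exact (hb s hs h1 h2).le
  have h1 := hle a ha
  have h2 := hle b hb'
  rcases h with h | h <;> linarith [h.1, h.2]

def OK (S : Finset Pt) (M : Finset (Sym2 Pt)) : Prop :=
  (∀ e ∈ M, ¬ e.IsDiag ∧ ∀ p ∈ e, p ∈ S) ∧ NoCross M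

lemma exists_max {S : Finset Pt} {E : Finset (Sym2 Pt)} (hE : OK S E) :
    ∃ M, E ⊆ M ∧ OK S M ∧ ∀ a ∈ S, ∀ b ∈ S, a ≠ b →
      (∀ f ∈ M, s(a, b) ≠ f → NoCrossPair s(a, b) f) → s(a, b) ∈ M := by
  have hsub : ∀ F, OK S F → F ⊆ S.sym2 := by
    intro F hF e he
    rw [Finset.mem_sym2_iff]
    exact (hF.1 e he).2
  obtain ⟨M, hM, hmax⟩ := Finset.exists_max_image
    (S.sym2.powerset.filter (fun F => E ⊆ F ∧ OK S F)) Finset.card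
    ⟨E, Finset.mem_filter.2 ⟨Finset.mem_powerset.2 (hsub E hE), subset_rfl, hE⟩⟩
  obtain ⟨_, hEM, hM⟩ := Finset.mem_filter.1 hM
  refine ⟨M, hEM, hM, ?_⟩
  intro a ha b hb hab hx
  by_contra hn
  have hok : OK S (insert s(a, b) M) := by
    constructor
    · intro e he
      rcases Finset.mem_insert.1 he with rfl | he
      · refine ⟨by simpa using hab, ?_⟩
        intro x hx
        simp only [Sym2.mem_iff] at hx
        rcases hx with rfl | rfl <;> assumption
      · exact hM.1 e he
    · intro e he f hf hef
      rcases Finset.mem_insert.1 he with rfl | he <;> rcases Finset.mem_insert.1 hf with rfl | hf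
      · exact absurd rfl hef
      · exact hx f hf hef
      · exact noCrossPair_symm (hx e he hef.symm)
      · exact hM.2 e he f hf hef
  have := hmax _ (Finset.mem_filter.2 ⟨Finset.mem_powerset.2 (hsub _ hok),
    hEM.trans (Finset.subset_insert _ _), hok⟩)
  rw [Finset.card_insert_of_notMem hn] at this
  omega


structure Ctx (S L R : Finset Pt) (t c : ℝ) (l0 r0 : Pt) (M : Finset (Sym2 Pt)) : Prop where
  pm : PM S M
  nc : NoCross M
  sp : Spl S L R t c
  l0L : l0 ∈ L
  r0R : r0 ∈ R
  bM : s(l0, r0) ∈ M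
  top : ∀ p ∈ L, ∀ q ∈ R, ht t c p q ≤ ht t c l0 r0
  mx : ∀ a ∈ S, ∀ b ∈ S, a ≠ b → (∀ f ∈ M, s(a, b) ≠ f → NoCrossPair s(a, b) f) → s(a, b) ∈ M

lemma ctx_tri {S L R t c l0 r0 M} (h : Ctx S L R t c l0 r0 M) {p q : Pt} (hp : p ∈ L) (hq : q ∈ R)
    (he : s(p, q) ∈ M) (hne : (p, q) ≠ (l0, r0)) :
    ∃ r ∈ S, 0 < ori p q r ∧ s(p, r) ∈ M ∧ s(q, r) ∈ M ∧
      ∀ c d w, s(c, d) ∈ M → w ∈ segment ℝ c d →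
      ¬ (0 < ori p q w ∧ 0 < ori q r w ∧ 0 < ori r p w) := by
  have hpc := h.sp.lc p hp
  have hqc := h.sp.rc q hq
  have hpS := h.sp.lS p hp
  have hqS := h.sp.rS q hq
  have hex : ∃ w ∈ S, 0 < ori p q w := by
    by_contra hn
    push Not at hn
    have h1 := hn l0 (h.sp.lS _ h.l0L)
    have h2 := hn r0 (h.sp.rS _ h.r0R)
    obtain ⟨θ, h0, h1', e⟩ := lrp_at (h.sp.lc _ h.l0L) (h.sp.rc _ h.r0R)
    have e1 := ori_hw (t := t) (c := c) (p := p) (q := q) (by linarith) (ht t c l0 r0)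
    rw [← e, ori_lrp] at e1
    have h3 := h.top p hp q hq
    have hle : ht t c l0 r0 - ht t c p q ≤ 0 := by
      by_contra hlt
      have := mul_pos (show 0 < phi t q - phi t p by linarith) (not_le.1 hlt)
      have a1 := mul_nonneg (show 0 ≤ 1 - θ by linarith) (neg_nonneg.2 h1)
      have a2 := mul_nonneg h0.le (neg_nonneg.2 h2)
      linarith
    obtain ⟨x, y⟩ := ht_inj h.pm hpc hqc (h.sp.lc _ h.l0L) (h.sp.rc _ h.r0R) he h.bM (by linarith)
    exact hne (by rw [x, y])
  obtain ⟨r, hr, hpos, hcl⟩ := tri_exists h.pm he hex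
  have hrp : r ≠ p := by rintro rfl; rw [ori_self_left] at hpos; exact lt_irrefl _ hpos
  have hrq : r ≠ q := by rintro rfl; rw [ori_self_right] at hpos; exact lt_irrefl _ hpos
  refine ⟨r, hr, hpos, ?_, ?_, hcl⟩
  · rw [Sym2.eq_swap]
    apply h.mx r hr p hpS hrp
    intro f hf hne
    induction f using Sym2.ind with
    | _ a b => exact clean_side h.pm hpS hr hpos hcl hf hne
  · apply h.mx q hqS r hr hrq.symm
    intro f hf hne
    induction f using Sym2.ind with
    | _ a b =>
      refine clean_side h.pm (p := r) (q := p) (r := q) hr hqS ?_ ?_ hf hne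
      · rw [← ori_rot r p q]; exact hpos
      · rintro a b w h1 h2 ⟨h3, h4, h5⟩
        exact hcl a b w h1 h2 ⟨h4, h5, h3⟩

structure VG (t : ℝ) (M : Finset (Sym2 Pt)) (σ : ℝ) (a b v : Pt) : Prop where
  e : s(a, b) ∈ M
  av : phi t a < phi t v
  vb : phi t v < phi t b
  pos : 0 < σ * ori a b v
  cl : ∀ c d w, s(c, d) ∈ M → w ∈ segment ℝ c d →
    ¬ (0 < σ * ori a b w ∧ 0 < σ * ori b v w ∧ 0 < σ * ori v a w)

/-- the lower edge sees the higher one -/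
lemma vg_aux {t M σ a b a' b' v} (h : VG t M σ a b v) (h' : VG t M σ a' b' v)
    (hlt : σ * ht t (phi t v) a b < σ * ht t (phi t v) a' b') : False := by
  obtain ⟨θ, h0, h1, e⟩ := lrp_at h.av h.vb
  obtain ⟨θ', h0', h1', e'⟩ := lrp_at h'.av h'.vb
  set y := ht t (phi t v) a b
  set y' := ht t (phi t v) a' b'
  have hv : v = hw t v.2 (phi t v) := by
    refine Prod.ext ?_ rfl
    simp only [hw, phi]; ring
  have o : σ * ori a b v = (phi t b - phi t a) * (σ * (v.2 - y)) := by
    have : ori a b v = (phi t b - phi t a) * (v.2 - y) := by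
      conv_lhs => rw [hv]
      exact ori_hw (by linarith [h.av, h.vb]) _
    rw [this]; ring
  have o' : σ * ori a' b' v = (phi t b' - phi t a') * (σ * (v.2 - y')) := by
    have : ori a' b' v = (phi t b' - phi t a') * (v.2 - y') := by
      conv_lhs => rw [hv]
      exact ori_hw (by linarith [h'.av, h'.vb]) _
    rw [this]; ring
  have p : 0 < σ * (v.2 - y) := by
    have := h.pos; rw [o] at this
    exact pos_of_mul_pos_right this (by linarith [h.av, h.vb])
  have p' : 0 < σ * (v.2 - y') := by
    have := h'.pos; rw [o'] at this
    exact pos_of_mul_pos_right this (by linarith [h'.av, h'.vb])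
  have hq : 0 < σ * (y' - y) := by linarith
  have hσ : σ ≠ 0 := by rintro rfl; simp at hq
  have hd : v.2 - y ≠ 0 := by intro hh; rw [hh] at p; simp at p
  -- the point
  set τ := (y' - y) / (v.2 - y) with hτ
  have τe : τ = (σ * (y' - y)) / (σ * (v.2 - y)) := by rw [hτ]; field_simp
  have τ0 : 0 < τ := by rw [τe]; exact div_pos hq p
  have τ1 : τ < 1 := by rw [τe, div_lt_one p]; linarith
  have hw' : hw t y' (phi t v) = lrp (hw t y (phi t v)) v τ := by
    have k : τ * (v.2 - y) = y' - y := by rw [hτ]; field_simp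
    refine Prod.ext ?_ ?_
    · simp only [lrp, hw]
      have : phi t v = v.1 + t * v.2 := rfl
      have k2 : t * (τ * (v.2 - y)) = t * (y' - y) := by rw [k]
      rw [this]
      linear_combination k2
    · simp only [lrp, hw]; linear_combination -k
  refine h.cl a' b' (hw t y' (phi t v)) h'.e (e' ▸ lrp_mem h0'.le h1'.le) ?_
  rw [hw', ← e]
  have c1 : ori b v a = ori a b v := by rw [ori_rot]
  have c2 : ori v a b = ori a b v := by rw [ori_rot v a b]
  simp only [ori_lrp, ori_self_left, ori_self_right, c1, c2]
  have P := h.pos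
  have q1 : 0 < 1 - τ := by linarith
  have q2 : 0 < 1 - θ := by linarith
  refine ⟨?_, ?_, ?_⟩
  · have := mul_pos τ0 P; linarith
  · have := mul_pos (mul_pos q1 q2) P; linarith
  · have := mul_pos (mul_pos q1 h0) P; linarith

lemma vg_inj {S t M σ a b a' b' v} (hpm : PM S M) (hσ : σ ≠ 0) (h : VG t M σ a b v)
    (h' : VG t M σ a' b' v) : a = a' ∧ b = b' := by
  rcases lt_trichotomy (σ * ht t (phi t v) a b) (σ * ht t (phi t v) a' b') with hh | hh | hh
  · exact (vg_aux h h' hh).elim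
  · exact ht_inj hpm h.av h.vb h'.av h'.vb h.e h'.e (mul_left_cancel₀ hσ hh)
  · exact (vg_aux h' h hh).elim

def XX (L R : Finset Pt) (l0 r0 : Pt) (M : Finset (Sym2 Pt)) : Finset (Pt × Pt) :=
  (L ×ˢ R).filter (fun x => s(x.1, x.2) ∈ M ∧ x ≠ (l0, r0))

lemma mem_XX {L R l0 r0 M} {p q : Pt} :
    (p, q) ∈ XX L R l0 r0 M ↔ p ∈ L ∧ q ∈ R ∧ s(p, q) ∈ M ∧ (p, q) ≠ (l0, r0) := by
  simp [XX, and_assoc]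

def Rec (t : ℝ) (M : Finset (Sym2 Pt)) (x : Pt × Pt) (y : Pt × Bool) : Prop :=
  (y.2 = true ∧ VG t M 1 x.1 x.2 y.1) ∨
  (y.2 = false ∧ ((y.1 = x.1 ∧ ∃ r, VG t M (-1) r x.2 x.1) ∨
    (y.1 = x.2 ∧ ∃ r, VG t M (-1) x.1 r x.2)))

lemma count {S L R t c l0 r0 M} (h : Ctx S L R t c l0 r0 M) :
    (XX L R l0 r0 M).card ≤ 2 * S.card := by
  have hrec : ∀ x ∈ XX L R l0 r0 M, ∃ y : Pt × Bool, y.1 ∈ S ∧ Rec t M x y := by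
    rintro ⟨p, q⟩ hx
    obtain ⟨hp, hq, he, hne⟩ := mem_XX.1 hx
    obtain ⟨r, hr, hpos, hpr, hqr, hcl⟩ := ctx_tri h hp hq he hne
    have hpc := h.sp.lc p hp
    have hqc := h.sp.rc q hq
    have hpS := h.sp.lS p hp
    have hqS := h.sp.rS q hq
    have hrp : r ≠ p := by rintro rfl; rw [ori_self_left] at hpos; exact lt_irrefl _ hpos
    have hrq : r ≠ q := by rintro rfl; rw [ori_self_right] at hpos; exact lt_irrefl _ hpos
    rcases h.sp.cov r hr with hrL | hrR
    · have hrc := h.sp.lc r hrL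
      rcases lt_trichotomy (phi t p) (phi t r) with hh | hh | hh
      · refine ⟨(r, true), hr, Or.inl ⟨rfl, he, hh, by dsimp only; linarith, by simpa using hpos, ?_⟩⟩
        simpa using hcl
      · exact absurd (h.sp.inj _ hpS _ hr hh).symm hrp
      · refine ⟨(p, false), hpS, Or.inr ⟨rfl, Or.inl ⟨rfl, r, ?_, hh, by dsimp only; linarith, ?_, ?_⟩⟩⟩
        · rw [Sym2.eq_swap]; exact hqr
        · dsimp only
          rw [ori_swap q r p, ori_rot]; linarith
        · rintro a b w h1 h2 ⟨h3, h4, h5⟩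
          dsimp only at h3 h4 h5
          rw [ori_swap q r] at h3
          rw [ori_swap p q] at h4
          rw [ori_swap r p] at h5
          exact hcl a b w h1 h2 ⟨by linarith, by linarith, by linarith⟩
    · have hrc := h.sp.rc r hrR
      rcases lt_trichotomy (phi t r) (phi t q) with hh | hh | hh
      · refine ⟨(r, true), hr, Or.inl ⟨rfl, he, by dsimp only; linarith, hh, by simpa using hpos, ?_⟩⟩
        simpa using hcl
      · exact absurd (h.sp.inj _ hr _ hqS hh) hrq
      · refine ⟨(q, false), hqS, Or.inr ⟨rfl, Or.inr ⟨rfl, r, hpr, by dsimp only; linarith, hh, ?_, ?_⟩⟩⟩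
        · dsimp only
          rw [ori_swap r p q, ← ori_rot r p q]; linarith
        · rintro a b w h1 h2 ⟨h3, h4, h5⟩
          dsimp only at h3 h4 h5
          rw [ori_swap r p] at h3
          rw [ori_swap q r] at h4
          rw [ori_swap p q] at h5
          exact hcl a b w h1 h2 ⟨by linarith, by linarith, by linarith⟩
  choose! f hf1 hf2 using hrec
  have hcard : (S ×ˢ (Finset.univ : Finset Bool)).card = 2 * S.card := by
    rw [Finset.card_product]; simp [mul_comm]
  rw [← hcard]
  apply Finset.card_le_card_of_injOn f
  · intro x hx
    simp only [Finset.coe_product, Set.mem_prod, Finset.mem_coe, Finset.mem_univ, and_true]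
    exact hf1 x hx
  · rintro ⟨p, q⟩ hx ⟨p', q'⟩ hx' heq
    have r1 := hf2 _ hx
    have r2 := hf2 _ hx'
    rw [← heq] at r2
    obtain ⟨hp, hq, -, -⟩ := mem_XX.1 hx
    obtain ⟨hp', hq', -, -⟩ := mem_XX.1 hx'
    have hpc := h.sp.lc p hp
    have hqc := h.sp.rc q hq
    have hpc' := h.sp.lc p' hp'
    have hqc' := h.sp.rc q' hq'
    generalize f (p, q) = y at r1 r2
    obtain ⟨v, fl⟩ := y
    rcases r1 with ⟨f1, g1⟩ | ⟨f1, ⟨e1, z1, g1⟩ | ⟨e1, z1, g1⟩⟩ <;>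
    rcases r2 with ⟨f2, g2⟩ | ⟨f2, ⟨e2, z2, g2⟩ | ⟨e2, z2, g2⟩⟩ <;> dsimp only at *
    · obtain ⟨rfl, rfl⟩ := vg_inj h.pm one_ne_zero g1 g2; rfl
    · rw [f1] at f2; simp at f2
    · rw [f1] at f2; simp at f2
    · rw [f1] at f2; simp at f2
    · rw [← e1] at g1; rw [← e2] at g2
      obtain ⟨_, rfl⟩ := vg_inj h.pm (by norm_num) g1 g2
      rw [← e1, ← e2]
    · rw [e1] at e2; subst e2; linarith
    · rw [f1] at f2; simp at f2
    · rw [e1] at e2; subst e2; linarith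
    · rw [← e1] at g1; rw [← e2] at g2
      obtain ⟨rfl, _⟩ := vg_inj h.pm (by norm_num) g1 g2
      rw [← e1, ← e2]

lemma sweep {S L R t c l0 r0 M} (h : Ctx S L R t c l0 r0 M) (k : ℕ) :
    ∀ (E : Finset (Sym2 Pt)) (y : ℝ), IsPST S E → E ⊆ M →
      (∀ x ∈ XX L R l0 r0 M, s(x.1, x.2) ∈ E → y < ht t c x.1 x.2) →
      ((XX L R l0 r0 M).filter (fun x => y < ht t c x.1 x.2)).card ≤ k →
      ∃ E', IsPST S E' ∧ E' ⊆ M ∧ (∀ x ∈ XX L R l0 r0 M, s(x.1, x.2) ∉ E') ∧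
        ReachesIn (EmptyTriRot S) k E E' := by
  induction k with
  | zero =>
    intro E y hE hEM hy hk
    refine ⟨E, hE, hEM, ?_, reaches_refl _ _⟩
    intro x hx hxE
    have h0 : ((XX L R l0 r0 M).filter (fun x => y < ht t c x.1 x.2)) = ∅ := by
      rw [← Finset.card_eq_zero]; omega
    have : x ∈ ((XX L R l0 r0 M).filter (fun x => y < ht t c x.1 x.2)) :=
      Finset.mem_filter.2 ⟨hx, hy x hx hxE⟩
    rw [h0] at this
    simp at this
  | succ k ih =>
    intro E y hE hEM hy hk
    by_cases hno : ∀ x ∈ XX L R l0 r0 M, s(x.1, x.2) ∉ E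
    · exact ⟨E, hE, hEM, hno, reaches_refl _ _⟩
    push Not at hno
    obtain ⟨x0, hx0, hx0E⟩ := hno
    obtain ⟨⟨p, q⟩, hm, hmin⟩ := Finset.exists_min_image
      ((XX L R l0 r0 M).filter (fun x => s(x.1, x.2) ∈ E)) (fun x => ht t c x.1 x.2)
      ⟨x0, Finset.mem_filter.2 ⟨hx0, hx0E⟩⟩
    obtain ⟨hX, hpqE⟩ := Finset.mem_filter.1 hm
    dsimp only at hpqE hmin
    obtain ⟨hp, hq, he, hne⟩ := mem_XX.1 hX
    obtain ⟨r, hr, hpos, hpr, hqr, hcl⟩ := ctx_tri h hp hq he hne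
    have hpc := h.sp.lc p hp
    have hqc := h.sp.rc q hq
    have hrp : r ≠ p := by rintro rfl; rw [ori_self_left] at hpos; exact lt_irrefl _ hpos
    have hrq : r ≠ q := by rintro rfl; rw [ori_self_right] at hpos; exact lt_irrefl _ hpos
    have hcl' : ∀ a b, s(a, b) ∈ M → ∀ w ∈ segment ℝ a b, w ∉ triInt p q r :=
      fun a b hab w hw hwt => hcl a b w hab hw (triInt_sub hpos w hwt)
    have step : ∀ E1, EmptyTriRot S E E1 → E1 ⊆ M →
        (∀ x ∈ XX L R l0 r0 M, s(x.1, x.2) ∈ E1 → s(x.1, x.2) ∉ E.erase s(p, q) →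
          ht t c p q < ht t c x.1 x.2) →
        ∃ E', IsPST S E' ∧ E' ⊆ M ∧ (∀ x ∈ XX L R l0 r0 M, s(x.1, x.2) ∉ E') ∧
        ReachesIn (EmptyTriRot S) (k + 1) E E' := by
      intro E1 hrot hE1 hnew
      have ih' := ih E1 (ht t c p q) hrot.2.1 hE1
      suffices hsf : ∃ E', IsPST S E' ∧ E' ⊆ M ∧ (∀ x ∈ XX L R l0 r0 M, s(x.1, x.2) ∉ E') ∧
          ReachesIn (EmptyTriRot S) k E1 E' by
        obtain ⟨E', a1, a2, a3, a4⟩ := hsf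
        refine ⟨E', a1, a2, a3, ?_⟩
        rw [add_comm]
        exact reaches_trans (reaches_one hrot) a4
      apply ih'
      · rintro ⟨x1, x2⟩ hx hxE
        by_cases hin : s(x1, x2) ∈ E.erase s(p, q)
        · obtain ⟨hn, hin⟩ := Finset.mem_erase.1 hin
          obtain ⟨hx1, hx2, hx3, -⟩ := mem_XX.1 hx
          refine lt_of_le_of_ne (hmin (x1, x2) (Finset.mem_filter.2 ⟨hx, hin⟩)) ?_
          intro heq
          obtain ⟨rfl, rfl⟩ := ht_inj h.pm hpc hqc (h.sp.lc _ hx1) (h.sp.rc _ hx2) he hx3 heq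
          exact hn rfl
        · exact hnew _ hx hxE hin
      · have : ((XX L R l0 r0 M).filter (fun x => ht t c p q < ht t c x.1 x.2)) ⊂
            ((XX L R l0 r0 M).filter (fun x => y < ht t c x.1 x.2)) := by
          have hyp : y < ht t c p q := hy (p, q) hX hpqE
          refine Finset.ssubset_iff_subset_ne.2 ⟨?_, ?_⟩
          · intro x hx
            obtain ⟨u, v⟩ := Finset.mem_filter.1 hx
            exact Finset.mem_filter.2 ⟨u, by linarith⟩
          · intro heq
            have : (p, q) ∈ ((XX L R l0 r0 M).filter (fun x => y < ht t c x.1 x.2)) :=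
              Finset.mem_filter.2 ⟨hX, hyp⟩
            rw [← heq] at this
            exact lt_irrefl _ (Finset.mem_filter.1 this).2
        have := Finset.card_lt_card this
        omega
    have hsub : ∀ e ∈ M, insert e (E.erase s(p, q)) ⊆ M := by
      intro e he x hx
      rcases Finset.mem_insert.1 hx with rfl | hx
      · exact he
      · exact hEM (Finset.mem_of_mem_erase hx)
    rcases exch (fun e he => (hE.1 e he).2) hE.2.2.1 hE.2.2.2 hpqE hr hrp hrq with ⟨hn, hcn⟩ | ⟨hn, hcn⟩
    · refine step _ (etr_of h.pm hE hEM hpqE hpr hn hcn h.nc hcl') (hsub _ hpr) ?_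
      rintro ⟨x1, x2⟩ hx hxE hnin
      obtain ⟨hx1, hx2, hx3, -⟩ := mem_XX.1 hx
      have hx1c := h.sp.lc _ hx1
      have hx2c := h.sp.rc _ hx2
      rcases Finset.mem_insert.1 hxE with hxe | hxe
      · rw [Sym2.eq_iff] at hxe
        dsimp only at *
        rcases hxe with ⟨rfl, rfl⟩ | ⟨rfl, rfl⟩
        · exact ht_right hpc hqc hx2c hpos
        · linarith
      · exact absurd hxe hnin
    · have heqs : E.erase s(p, q) = E.erase s(q, p) := by rw [Sym2.eq_swap]
      rw [heqs] at hcn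
      refine step _ (etr_of h.pm hE hEM (by rwa [Sym2.eq_swap]) hqr hn hcn h.nc
        (by rw [triInt_comm]; exact hcl')) (by rw [← heqs]; exact hsub _ hqr) ?_
      rintro ⟨x1, x2⟩ hx hxE hnin
      obtain ⟨hx1, hx2, hx3, -⟩ := mem_XX.1 hx
      have hx1c := h.sp.lc _ hx1
      have hx2c := h.sp.rc _ hx2
      rw [heqs] at hnin
      rcases Finset.mem_insert.1 hxE with hxe | hxe
      · rw [Sym2.eq_iff] at hxe
        dsimp only at *
        rcases hxe with ⟨rfl, rfl⟩ | ⟨rfl, rfl⟩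
        · linarith
        · exact ht_left hpc hqc hx1c hpos
      · exact absurd hxe hnin

lemma sweep' {S L R t c l0 r0 M} (h : Ctx S L R t c l0 r0 M) (E : Finset (Sym2 Pt))
    (hE : IsPST S E) (hEM : E ⊆ M) :
    ∃ E', IsPST S E' ∧ (∀ p ∈ L, ∀ q ∈ R, s(p, q) ∈ E' → p = l0 ∧ q = r0) ∧
        ReachesIn (EmptyTriRot S) (2 * S.card) E E' := by
  obtain ⟨y, hy⟩ : ∃ y, ∀ x ∈ XX L R l0 r0 M, y < ht t c x.1 x.2 := by
    obtain ⟨y, hy⟩ := ((XX L R l0 r0 M).image (fun x => ht t c x.1 x.2)).bddBelow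
    refine ⟨y - 1, fun x hx => ?_⟩
    have := hy (Finset.mem_coe.2 (Finset.mem_image_of_mem (fun x => ht t c x.1 x.2) hx))
    linarith
  obtain ⟨E', a1, a2, a3, a4⟩ := sweep h (2 * S.card) E y hE hEM (fun x hx _ => hy x hx)
    ((Finset.card_le_card (Finset.filter_subset _ _)).trans (count h))
  refine ⟨E', a1, ?_, a4⟩
  intro p hp q hq he
  by_contra hn
  refine a3 (p, q) (mem_XX.2 ⟨hp, hq, a2 he, ?_⟩) he
  intro e
  rw [Prod.mk.injEq] at e
  exact hn e


structure JJ (S U V : Finset Pt) (u v : Pt) : Prop where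
  uU : u ∈ U
  vV : v ∈ V
  US : ∀ p ∈ U, p ∈ S
  VS : ∀ p ∈ V, p ∈ S
  cov : ∀ p ∈ S, p ∈ U ∨ p ∈ V
  dj : Disjoint (convexHull ℝ (U : Set Pt)) (convexHull ℝ (V : Set Pt))
  nb : ∀ a ∈ S, ∀ b ∈ S, a ≠ b → s(u, v) ≠ s(a, b) → NoCrossPair s(u, v) s(a, b)
  tb : ∀ p ∈ S, ∀ q ∈ S, ∀ r ∈ S, Disjoint (segOf s(u, v)) (triInt p q r)

lemma JJ.symm' {S U V u v} (h : JJ S U V u v) : JJ S V U v u := by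
  refine ⟨h.vV, h.uU, h.VS, h.US, fun p hp => (h.cov p hp).symm, h.dj.symm, ?_, ?_⟩
  · rw [Sym2.eq_swap]; exact h.nb
  · rw [Sym2.eq_swap]; exact h.tb

lemma JJ.ne {S U V u v} (h : JJ S U V u v) {p q : Pt} (hp : p ∈ U) (hq : q ∈ V) : p ≠ q := by
  rintro rfl
  exact Set.disjoint_left.1 h.dj (subset_convexHull ℝ _ (Finset.mem_coe.2 hp))
    (subset_convexHull ℝ _ (Finset.mem_coe.2 hq))

lemma JJ.disj {S U V u v} (h : JJ S U V u v) : Disjoint U V :=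
  Finset.disjoint_left.2 (fun _ hp hq => h.ne hp hq rfl)

lemma JJ.un {S U V u v} (h : JJ S U V u v) : U ∪ V = S := by
  ext p
  rw [Finset.mem_union]
  exact ⟨fun hp => hp.elim (h.US p) (h.VS p), h.cov p⟩

lemma seg_hull {U : Finset Pt} {e : Sym2 Pt} (h : ∀ p ∈ e, p ∈ U) :
    segOf e ⊆ convexHull ℝ (U : Set Pt) := by
  induction e using Sym2.ind with
  | _ a b =>
    rw [segOf_mk]
    exact (convex_convexHull ℝ _).segment_subset
      (subset_convexHull ℝ _ (Finset.mem_coe.2 (h a (by simp))))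
      (subset_convexHull ℝ _ (Finset.mem_coe.2 (h b (by simp))))

lemma tri_hull {U : Finset Pt} {p q r : Pt} (hp : p ∈ U) (hq : q ∈ U) (hr : r ∈ U) :
    triInt p q r ⊆ convexHull ℝ (U : Set Pt) := by
  refine interior_subset.trans (convexHull_mono ?_)
  intro x hx
  simp only [Set.mem_insert_iff, Set.mem_singleton_iff] at hx
  rcases hx with rfl | rfl | rfl <;> simpa

lemma sym_ne {e f : Sym2 Pt} {U V : Finset Pt} (h : Disjoint U V) (he : ∀ p ∈ e, p ∈ U)
    (hf : ∀ p ∈ f, p ∈ V) : e ≠ f := by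
  rintro rfl
  induction e using Sym2.ind with
  | _ a b => exact Finset.disjoint_left.1 h (he a (by simp)) (hf a (by simp))

lemma JJ.b_notin {S U V u v} (h : JJ S U V u v) {A : Finset (Sym2 Pt)}
    (hA : ∀ e ∈ A, ∀ p ∈ e, p ∈ U) : s(u, v) ∉ A := by
  intro hm
  exact h.ne (hA _ hm v (by simp)) h.vV rfl

lemma JJ.join {S U V u v} (h : JJ S U V u v) {A B : Finset (Sym2 Pt)} (hA : IsPST U A)
    (hB : IsPST V B) : IsPST S (insert s(u, v) (A ∪ B)) := by
  have hA2 : ∀ e ∈ A, ∀ p ∈ e, p ∈ U := fun e he => (hA.1 e he).2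
  have hB2 : ∀ e ∈ B, ∀ p ∈ e, p ∈ V := fun e he => (hB.1 e he).2
  have hbA := h.b_notin hA2
  have hbB : s(u, v) ∉ B := by
    rw [Sym2.eq_swap]; exact h.symm'.b_notin hB2
  have hAB : Disjoint A B := by
    rw [Finset.disjoint_left]
    intro e h1 h2
    exact sym_ne h.disj (hA2 e h1) (hB2 e h2) rfl
  have nAB : ∀ e ∈ A, ∀ f ∈ B, NoCrossPair e f := by
    intro e he f hf w hw
    exact (Set.disjoint_left.1 h.dj (seg_hull (hA2 e he) hw.1) (seg_hull (hB2 f hf) hw.2)).elim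
  have edS : ∀ e ∈ A ∪ B, ¬ e.IsDiag ∧ ∀ p ∈ e, p ∈ S := by
    intro e he
    rcases Finset.mem_union.1 he with he | he
    · exact ⟨(hA.1 e he).1, fun p hp => h.US p (hA2 e he p hp)⟩
    · exact ⟨(hB.1 e he).1, fun p hp => h.VS p (hB2 e he p hp)⟩
  have nb : ∀ e ∈ A ∪ B, NoCrossPair s(u, v) e := by
    intro e he
    have hne : s(u, v) ≠ e := by
      rintro rfl
      rcases Finset.mem_union.1 he with he | he
      · exact hbA he
      · exact hbB he
    obtain ⟨h1, h2⟩ := edS e he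
    induction e using Sym2.ind with
    | _ a b => exact h.nb a (h2 a (by simp)) b (h2 b (by simp)) (by simpa using h1) hne
  refine ⟨?_, ?_, ?_, ?_⟩
  · intro e he
    rcases Finset.mem_insert.1 he with rfl | he
    · refine ⟨by simpa using h.ne h.uU h.vV, ?_⟩
      intro x hx
      simp only [Sym2.mem_iff] at hx
      rcases hx with rfl | rfl
      · exact h.US _ h.uU
      · exact h.VS _ h.vV
    · exact edS e he
  · intro e he f hf hef
    rcases Finset.mem_insert.1 he with rfl | he <;> rcases Finset.mem_insert.1 hf with rfl | hf
    · exact absurd rfl hef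
    · exact nb f hf
    · exact noCrossPair_symm (nb e he)
    · rcases Finset.mem_union.1 he with he | he <;> rcases Finset.mem_union.1 hf with hf | hf
      · exact hA.2.1 e he f hf hef
      · exact nAB e he f hf
      · exact noCrossPair_symm (nAB f hf e he)
      · exact hB.2.1 e he f hf hef
  · rw [Finset.card_insert_of_notMem (by simp [hbA, hbB]), Finset.card_union_of_disjoint hAB,
      ← h.un, Finset.card_union_of_disjoint h.disj, ← hA.2.2.1, ← hB.2.2.1]
    ring
  · have hall : ∀ p ∈ S, Cn (insert s(u, v) (A ∪ B)) u p := by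
      intro p hp
      rcases h.cov p hp with hp | hp
      · refine Cn.mono ?_ (hA.2.2.2 u h.uU p hp)
        intro e he
        simp [he]
      · refine Relation.ReflTransGen.head (b := v) (Finset.mem_insert_self _ _) ?_
        refine Cn.mono ?_ (hB.2.2.2 v h.vV p hp)
        intro e he
        simp [he]
    exact fun p hp q hq => (hall p hp).symm'.trans (hall q hq)

lemma JJ.lift1 {S U V u v} (h : JJ S U V u v) {B : Finset (Sym2 Pt)}
    (hB : IsPST V B) (A A' : Finset (Sym2 Pt)) (hr : EmptyTriRot U A A') :
    EmptyTriRot S (insert s(u, v) (A ∪ B)) (insert s(u, v) (A' ∪ B)) := by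
  obtain ⟨hA, hA', p, q, r, d1, d2, hc⟩ := hr
  have hA2 : ∀ e ∈ A, ∀ p ∈ e, p ∈ U := fun e he => (hA.1 e he).2
  have hA2' : ∀ e ∈ A', ∀ p ∈ e, p ∈ U := fun e he => (hA'.1 e he).2
  have hB2 : ∀ e ∈ B, ∀ p ∈ e, p ∈ V := fun e he => (hB.1 e he).2
  have diff : ∀ A A' : Finset (Sym2 Pt), (∀ e ∈ A, ∀ p ∈ e, p ∈ U) →
      insert s(u, v) (A ∪ B) \ insert s(u, v) (A' ∪ B) = A \ A' := by
    intro A A' hA2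
    ext e
    simp only [Finset.mem_sdiff, Finset.mem_insert, Finset.mem_union]
    constructor
    · rintro ⟨a, b⟩
      tauto
    · rintro ⟨a, b⟩
      have n1 : e ≠ s(u, v) := by rintro rfl; exact h.b_notin hA2 a
      have n2 : e ∉ B := fun hb => sym_ne h.disj (hA2 e a) (hB2 e hb) rfl
      tauto
  have m1 : s(p, q) ∈ A := by
    have : s(p, q) ∈ A \ A' := by rw [d1]; simp
    exact (Finset.mem_sdiff.1 this).1
  have m2 : s(p, r) ∈ A' := by
    have : s(p, r) ∈ A' \ A := by rw [d2]; simp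
    exact (Finset.mem_sdiff.1 this).1
  have hp := hA2 _ m1 p (by simp)
  have hq := hA2 _ m1 q (by simp)
  have hr := hA2' _ m2 r (by simp)
  refine ⟨h.join hA hB, h.join hA' hB, p, q, r, ?_, ?_, ?_⟩
  · rw [diff _ _ hA2, d1]
  · rw [diff _ _ hA2', d2]
  · intro g hg
    have : g = s(u, v) ∨ g ∈ B ∨ g ∈ A ∪ A' := by
      simp only [Finset.mem_union, Finset.mem_insert] at hg ⊢
      tauto
    rcases this with rfl | hg | hg
    · exact h.tb p (h.US _ hp) q (h.US _ hq) r (h.US _ hr)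
    · exact Set.disjoint_of_subset (seg_hull (hB2 g hg)) (tri_hull hp hq hr) h.dj.symm
    · exact hc g hg

def flt (U : Finset Pt) (E : Finset (Sym2 Pt)) : Finset (Sym2 Pt) :=
  E.filter (fun e => ∀ p ∈ e, p ∈ U)

lemma mem_flt {U : Finset Pt} {E : Finset (Sym2 Pt)} {a b : Pt} :
    s(a, b) ∈ flt U E ↔ s(a, b) ∈ E ∧ a ∈ U ∧ b ∈ U := by
  rw [flt, Finset.mem_filter, Sym2.ball]

lemma JJ.split_conn {S U V u v} (h : JJ S U V u v) {E : Finset (Sym2 Pt)} (hE : IsPST S E)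
    (hx : ∀ p ∈ U, ∀ q ∈ V, s(p, q) ∈ E → p = u ∧ q = v) :
    ∀ p ∈ U, ∀ q ∈ U, Cn (flt U E) p q := by
  have key : ∀ p ∈ U, ∀ x, Cn E p x →
      (x ∈ U ∧ Cn (flt U E) p x) ∨ (x ∈ V ∧ Cn (flt U E) p u) := by
    intro p hp x hpx
    induction hpx with
    | refl => exact Or.inl ⟨hp, Relation.ReflTransGen.refl⟩
    | @tail b c hb hbc ih =>
      have hcS : c ∈ S := (hE.1 _ hbc).2 c (by simp)
      rcases ih with ⟨hbU, ih⟩ | ⟨hbV, ih⟩ <;> rcases h.cov c hcS with hc | hc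
      · exact Or.inl ⟨hc, ih.tail (mem_flt.2 ⟨hbc, hbU, hc⟩)⟩
      · obtain ⟨rfl, rfl⟩ := hx _ hbU _ hc hbc
        exact Or.inr ⟨hc, ih⟩
      · obtain ⟨rfl, rfl⟩ := hx _ hc _ hbV (by rwa [Sym2.eq_swap])
        exact Or.inl ⟨hc, ih⟩
      · exact Or.inr ⟨hc, ih⟩
  intro p hp q hq
  rcases key p hp q (hE.2.2.2 p (h.US p hp) q (h.US q hq)) with h' | h'
  · exact h'.2
  · exact (h.ne hq h'.1 rfl).elim

lemma JJ.split {S U V u v} (h : JJ S U V u v) {E : Finset (Sym2 Pt)} (hE : IsPST S E)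
    (hx : ∀ p ∈ U, ∀ q ∈ V, s(p, q) ∈ E → p = u ∧ q = v) :
    IsPST U (flt U E) ∧ IsPST V (flt V E) ∧ E = insert s(u, v) (flt U E ∪ flt V E) := by
  have c1 := h.split_conn hE hx
  have c2 := h.symm'.split_conn hE (fun p hp q hq he => (hx q hq p hp (by rwa [Sym2.eq_swap])).symm)
  have hbE : s(u, v) ∈ E := by
    by_contra hb
    have key : ∀ x, Cn E u x → x ∈ U := by
      intro x hux
      induction hux with
      | refl => exact h.uU
      | @tail b c _ hbc ih =>
        rcases h.cov c ((hE.1 _ hbc).2 c (by simp)) with hc | hc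
        · exact hc
        · obtain ⟨rfl, rfl⟩ := hx _ ih _ hc hbc
          exact absurd hbc hb
    exact h.ne (key v (hE.2.2.2 u (h.US _ h.uU) v (h.VS _ h.vV))) h.vV rfl
  have eU : ∀ e ∈ flt U E, ∀ p ∈ e, p ∈ U := fun e he => (Finset.mem_filter.1 he).2
  have eV : ∀ e ∈ flt V E, ∀ p ∈ e, p ∈ V := fun e he => (Finset.mem_filter.1 he).2
  have sU : flt U E ⊆ E := Finset.filter_subset _ _
  have sV : flt V E ⊆ E := Finset.filter_subset _ _
  have heq : E = insert s(u, v) (flt U E ∪ flt V E) := by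
    apply Finset.Subset.antisymm
    · intro e he
      induction e using Sym2.ind with
      | _ a b =>
        have ha := h.cov a ((hE.1 _ he).2 a (by simp))
        have hb := h.cov b ((hE.1 _ he).2 b (by simp))
        rw [Finset.mem_insert, Finset.mem_union, mem_flt, mem_flt]
        rcases ha with ha | ha <;> rcases hb with hb | hb
        · exact Or.inr (Or.inl ⟨he, ha, hb⟩)
        · obtain ⟨rfl, rfl⟩ := hx _ ha _ hb he
          exact Or.inl rfl
        · obtain ⟨rfl, rfl⟩ := hx _ hb _ ha (by rwa [Sym2.eq_swap])
          exact Or.inl Sym2.eq_swap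
        · exact Or.inr (Or.inr ⟨he, ha, hb⟩)
    · intro e he
      rcases Finset.mem_insert.1 he with rfl | he
      · exact hbE
      · rcases Finset.mem_union.1 he with he | he
        · exact sU he
        · exact sV he
  have hdisj : Disjoint (flt U E) (flt V E) := by
    rw [Finset.disjoint_left]
    intro e h1 h2
    exact sym_ne h.disj (eU e h1) (eV e h2) rfl
  have hb1 := h.b_notin eU
  have hb2 : s(u, v) ∉ flt V E := by rw [Sym2.eq_swap]; exact h.symm'.b_notin eV
  have k : E.card = (flt U E).card + (flt V E).card + 1 := by
    conv_lhs => rw [heq]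
    rw [Finset.card_insert_of_notMem (by simp [hb1, hb2]), Finset.card_union_of_disjoint hdisj]
  have k2 : S.card = U.card + V.card := by rw [← h.un, Finset.card_union_of_disjoint h.disj]
  have k3 := conn_card eU ⟨u, h.uU⟩ c1
  have k4 := conn_card eV ⟨v, h.vV⟩ c2
  have k5 := hE.2.2.1
  refine ⟨⟨fun e he => ⟨(hE.1 e (sU he)).1, eU e he⟩,
    fun e he f hf => hE.2.1 e (sU he) f (sU hf), by omega, c1⟩,
    ⟨fun e he => ⟨(hE.1 e (sV he)).1, eV e he⟩,
    fun e he f hf => hE.2.1 e (sV he) f (sV hf), by omega, c2⟩, heq⟩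

lemma phi_convex (t c : ℝ) : Convex ℝ {w : Pt | phi t w < c} := by
  intro a ha b hb x y hx hy hxy
  simp only [Set.mem_setOf_eq] at *
  have e : phi t (x • a + y • b) = x * phi t a + y * phi t b := by simp [phi]; ring
  have hy' : y = 1 - x := by linarith
  rw [e]
  rcases hx.eq_or_lt with h | h
  · subst h; subst hy'; linarith
  · have := mul_lt_mul_of_pos_left ha h
    have := mul_le_mul_of_nonneg_left hb.le hy
    subst hy'; linarith

lemma phi_convex' (t c : ℝ) : Convex ℝ {w : Pt | c < phi t w} := by
  intro a ha b hb x y hx hy hxy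
  simp only [Set.mem_setOf_eq] at *
  have e : phi t (x • a + y • b) = x * phi t a + y * phi t b := by simp [phi]; ring
  have hy' : y = 1 - x := by linarith
  rw [e]
  rcases hx.eq_or_lt with h | h
  · subst h; subst hy'; linarith
  · have := mul_lt_mul_of_pos_left ha h
    have := mul_le_mul_of_nonneg_left hb.le hy
    subst hy'; linarith

lemma jj_of {S L R t c} (hs : Spl S L R t c)
    (hg : ∀ a ∈ S, ∀ b ∈ S, ∀ c ∈ S, a ≠ b → a ≠ c → b ≠ c → ori a b c ≠ 0) {l r : Pt}
    (hl : l ∈ L) (hr : r ∈ R) (hb : ∀ s ∈ S, s ≠ l → s ≠ r → ori l r s < 0) :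
    JJ S L R l r := by
  have hlS := hs.lS l hl
  have hrS := hs.rS r hr
  have hlr : l ≠ r := by rintro rfl; linarith [hs.lc _ hl, hs.rc _ hr]
  refine ⟨hl, hr, hs.lS, hs.rS, hs.cov, ?_, ?_, ?_⟩
  · rw [Set.disjoint_left]
    intro w h1 h2
    have a1 : w ∈ {w : Pt | phi t w < c} :=
      convexHull_min (fun p hp => hs.lc p (Finset.mem_coe.1 hp)) (phi_convex t c) h1
    have a2 : w ∈ {w : Pt | c < phi t w} :=
      convexHull_min (fun p hp => hs.rc p (Finset.mem_coe.1 hp)) (phi_convex' t c) h2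
    simp only [Set.mem_setOf_eq] at a1 a2
    exact lt_asymm a1 a2
  · intro a ha b hb' hab hne
    exact bridge_nocross hg hlS hrS hlr hb ha hb' hab hne
  · have hle : ∀ s ∈ S, 0 ≤ ori r l s := by
      intro s hsS
      rw [ori_swap]
      by_cases h1 : s = l
      · rw [h1, ori_self_left]; simp
      by_cases h2 : s = r
      · rw [h2, ori_self_right]; simp
      linarith [hb s hsS h1 h2]
    intro p hp q hq r' hr'
    rw [Set.disjoint_left, segOf_mk]
    intro w h1 h2
    have := triInt_pos hlr.symm (hle p hp) (hle q hq) (hle r' hr') w h2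
    rw [ori_swap, ori_seg_zero h1] at this
    linarith

lemma genpos_sub {S U : Finset Pt} (h : GenPos S) (hU : ∀ p ∈ U, p ∈ S) : GenPos U :=
  fun p hp q hq r hr => h p (hU p hp) q (hU q hq) r (hU r hr)

lemma main_ind (n : ℕ) : ∀ S : Finset Pt, S.card = n → 1 ≤ n → GenPos S →
    ∃ C, IsPST S C ∧ ∀ E, IsPST S E → ReachesIn (EmptyTriRot S) (2 * n * Nat.clog 2 n) E C := by
  induction n using Nat.strong_induction_on with
  | _ n ih =>
    intro S hS hn hG
    rcases Nat.lt_or_ge n 2 with h2 | h2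
    · have hn1 : n = 1 := by omega
      subst hn1
      refine ⟨∅, ⟨by simp, by intro e he; simp at he, by simp [hS], ?_⟩, ?_⟩
      · intro p hp q hq
        obtain ⟨a, rfl⟩ := Finset.card_eq_one.1 hS
        simp only [Finset.mem_singleton] at hp hq
        subst hp; subst hq
        exact Relation.ReflTransGen.refl
      · intro E hE
        have : E = ∅ := by
          rw [← Finset.card_eq_zero]
          have := hE.2.2.1
          omega
        subst this
        exact reaches_refl _ _
    obtain ⟨L, R, t, c, hs, hLc, hRc⟩ := exists_spl S (n / 2) (by omega) (by omega)
    have hg := genpos_ori hG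
    obtain ⟨l, hl, r, hr, htop, hb⟩ := exists_bridge hs hg (Finset.card_pos.1 (by omega))
      (Finset.card_pos.1 (by omega))
    have J := jj_of hs hg hl hr hb
    obtain ⟨CL, hCL, hL⟩ := ih (n / 2) (by omega) L hLc (by omega) (genpos_sub hG hs.lS)
    obtain ⟨CR, hCR, hR⟩ := ih (S.card - n / 2) (by omega) R hRc (by omega) (genpos_sub hG hs.rS)
    refine ⟨insert s(l, r) (CL ∪ CR), J.join hCL hCR, ?_⟩
    intro E hE
    have hlr : l ≠ r := J.ne hl hr
    have hok : OK S (insert s(l, r) E) := by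
      have nb : ∀ e ∈ E, s(l, r) ≠ e → NoCrossPair s(l, r) e := by
        intro e he hne
        obtain ⟨h1, h2⟩ := hE.1 e he
        induction e using Sym2.ind with
        | _ a b => exact J.nb a (h2 a (by simp)) b (h2 b (by simp)) (by simpa using h1) hne
      constructor
      · intro e he
        rcases Finset.mem_insert.1 he with rfl | he
        · refine ⟨by simpa using hlr, ?_⟩
          intro x hx
          simp only [Sym2.mem_iff] at hx
          rcases hx with rfl | rfl
          · exact hs.lS _ hl
          · exact hs.rS _ hr
        · exact hE.1 e he
      · intro e he f hf hef
        rcases Finset.mem_insert.1 he with rfl | he <;> rcases Finset.mem_insert.1 hf with rfl | hf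
        · exact absurd rfl hef
        · exact nb f hf hef
        · exact noCrossPair_symm (nb e he hef.symm)
        · exact hE.2.1 e he f hf hef
    obtain ⟨M, hEM, hM, hmx⟩ := exists_max hok
    have ctx : Ctx S L R t c l r M := ⟨pm_of hG hM.1 hM.2, hM.2, hs, hl, hr,
      hEM (Finset.mem_insert_self _ _), htop, hmx⟩
    obtain ⟨E1, hE1, hx, hreach⟩ := sweep' ctx E hE ((Finset.subset_insert _ _).trans hEM)
    obtain ⟨p1, p2, heq⟩ := J.split hE1 hx
    have r1 := hL _ p1
    have r2 := hR _ p2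
    have r1' := reaches_map (step' := EmptyTriRot S) (fun A => insert s(l, r) (A ∪ flt R E1))
      (J.lift1 p2) r1
    have r2' := reaches_map (step' := EmptyTriRot S) (fun A => insert s(r, l) (A ∪ CL))
      (J.symm'.lift1 hCL) r2
    rw [← heq] at r1'
    rw [Sym2.eq_swap (a := r), Finset.union_comm _ CL, Finset.union_comm _ CL] at r2'
    refine reaches_mono (reaches_trans (reaches_trans hreach r1') r2') ?_
    rw [hS]
    have hc1 : Nat.clog 2 n = Nat.clog 2 (n - n / 2) + 1 := by
      rw [Nat.clog_of_two_le (by norm_num) h2]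
      congr 2
      omega
    have hc2 : Nat.clog 2 (n / 2) ≤ Nat.clog 2 (n - n / 2) := Nat.clog_mono_right _ (by omega)
    rw [hc1]
    set K := Nat.clog 2 (n - n / 2)
    have h3 : 2 * (n / 2) * Nat.clog 2 (n / 2) ≤ 2 * (n / 2) * K := Nat.mul_le_mul_left _ hc2
    have h4 : 2 * (n / 2) * K + 2 * (n - n / 2) * K = 2 * n * K := by
      rw [← Nat.add_mul]
      congr 1
      omega
    calc 2 * n + 2 * (n / 2) * Nat.clog 2 (n / 2) + 2 * (n - n / 2) * K
        ≤ 2 * n + (2 * (n / 2) * K + 2 * (n - n / 2) * K) := by omega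
      _ = 2 * n * (K + 1) := by rw [h4]; ring

theorem final :
    ∃ c : ℝ, 0 < c ∧ ∀ n : ℕ, 2 ≤ n → ∀ S : Finset Pt, S.card = n → GenPos S →
      ∀ E E' : Finset (Sym2 Pt), IsPST S E → IsPST S E' →
        ∃ m : ℕ, (m : ℝ) ≤ c * n * Real.log n ∧ ReachesIn (EmptyTriRot S) m E E' := by
  have hl2 : 0 < Real.log 2 := Real.log_pos (by norm_num)
  refine ⟨8 / Real.log 2, by positivity, ?_⟩
  intro n hn S hS hG E E' hE hE'
  obtain ⟨C, hC, hall⟩ := main_ind n S hS (by omega) hG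
  refine ⟨2 * n * Nat.clog 2 n + 2 * n * Nat.clog 2 n, ?_,
    reaches_trans (hall E hE) (reaches_symm etr_symm (hall E' hE'))⟩
  have hlog : Real.log 2 ≤ Real.log n := Real.log_le_log (by norm_num) (by exact_mod_cast hn)
  have hcl : (Nat.clog 2 n : ℝ) * Real.log 2 ≤ 2 * Real.log n := by
    have h1 : 2 ^ (Nat.clog 2 n - 1) < n := Nat.pow_pred_clog_lt_self (by norm_num) (by omega)
    have h2 : (2 : ℝ) ^ (Nat.clog 2 n - 1) ≤ n := by exact_mod_cast h1.le
    have h3 := Real.log_le_log (by positivity) h2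
    rw [Real.log_pow] at h3
    have h4 : 1 ≤ Nat.clog 2 n := Nat.clog_pos (by norm_num) hn
    rw [Nat.cast_sub h4] at h3
    push_cast at h3
    linarith
  have hn0 : (0 : ℝ) ≤ n := Nat.cast_nonneg _
  push_cast
  have e : 8 / Real.log 2 * n * Real.log n = (8 * n * Real.log n) / Real.log 2 := by ring
  rw [e, le_div_iff₀ hl2]
  have := mul_le_mul_of_nonneg_left hcl (show (0:ℝ) ≤ 4 * n by positivity)
  linarith

/-- any two noncrossing spanning trees on `n` points in general position are
connected by `O(n log n)` empty-triangle rotations. -/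
theorem stmt_3 :
    ∃ c : ℝ, 0 < c ∧ ∀ n : ℕ, 2 ≤ n → ∀ S : Finset Pt, S.card = n → GenPos S →
      ∀ E E' : Finset (Sym2 Pt), IsPST S E → IsPST S E' →
        ∃ m : ℕ, (m : ℝ) ≤ c * n * Real.log n ∧ ReachesIn (EmptyTriRot S) m E E' := by
  exact final
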